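/- Let 𝕋_3 denote the 3-uniform generalized triangle. There exist constants N_0 and c > 0 such that for all integers n ≥ N_0 and all integers t with 0 ≤ t ≤ c·n, one has EX(n,(t+1)𝕋_3) = { K_t^3 ⋈ T_3(n−t,3) }. -/

import Mathlib

open Filter

namespace DensityCH

/-- An `r`-uniform hypergraph with vertices in `ℕ`:
a finite vertex set together with a set of `r`-element edges. -/
structure HGraph (r : ℕ) where
  verts : Finset ℕ
  edges : Finset (Finset ℕ)
  edges_sub : ∀ e ∈ edges, e ⊆ verts
  edges_card : ∀ e ∈ edges, e.card = r

namespace HGraph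

/-- Build an `r`-graph from a vertex set and a set of candidate edges,
keeping exactly the well-formed candidates. -/
def ofEdges (r : ℕ) (V : Finset ℕ) (E : Finset (Finset ℕ)) : HGraph r where
  verts := V
  edges := E.filter fun e => e ⊆ V ∧ e.card = r
  edges_sub := fun e he => ((Finset.mem_filter.mp he).2).1
  edges_card := fun e he => ((Finset.mem_filter.mp he).2).2

variable {r : ℕ}

/-- `H` contains a copy of `F`, i.e. a subgraph isomorphic to `F`. -/
def IsCopyIn (F H : HGraph r) : Prop :=
  ∃ f : ℕ → ℕ, Set.InjOn f ↑F.verts ∧ (∀ v ∈ F.verts, f v ∈ H.verts) ∧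
    ∀ e ∈ F.edges, e.image f ∈ H.edges

/-- The subgraph of `H` induced on `S`. -/
def induce (H : HGraph r) (S : Finset ℕ) : HGraph r :=
  ofEdges r (H.verts ∩ S) (H.edges.filter fun e => e ⊆ S)

/-- Delete a vertex from `H`. -/
def deleteVert (H : HGraph r) (v : ℕ) : HGraph r :=
  ofEdges r (H.verts.erase v) (H.edges.filter fun e => v ∉ e)

/-- The degree of a vertex. -/
def deg (H : HGraph r) (v : ℕ) : ℕ := (H.edges.filter fun e => v ∈ e).card

/-- The maximum degree `Δ(H)`. -/
def maxDeg (H : HGraph r) : ℕ := H.verts.sup H.deg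

/-- The minimum degree `δ(H)`. -/
def minDeg (H : HGraph r) : ℕ :=
  if h : H.verts.Nonempty then H.verts.inf' h H.deg else 0

/-- The average degree `d(H) = r·|E(H)|/|V(H)|`. -/
noncomputable def avgDeg (H : HGraph r) : ℝ :=
  (r : ℝ) * (H.edges.card : ℝ) / (H.verts.card : ℝ)

/-- `H` contains `k` pairwise vertex-disjoint copies of `F`, i.e. `ν(F,H) ≥ k`. -/
def HasMatching (F H : HGraph r) (k : ℕ) : Prop :=
  ∃ S : Fin k → Finset ℕ,
    (∀ i, S i ⊆ H.verts ∧ (S i).card = F.verts.card) ∧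
    (∀ i j, i ≠ j → Disjoint (S i) (S j)) ∧
    ∀ i, F.IsCopyIn (H.induce (S i))

/-- Isomorphism of hypergraphs. -/
def Iso (G H : HGraph r) : Prop :=
  ∃ f : ℕ → ℕ, Set.BijOn f ↑G.verts ↑H.verts ∧
    ∀ e ∈ Finset.powersetCard r G.verts, (e ∈ G.edges ↔ e.image f ∈ H.edges)

/-- The join `G ⋈ H`: all edges of `G`, all edges of `H`, and all `r`-sets meeting
both vertex sets. -/
def join (G H : HGraph r) : HGraph r :=
  ofEdges r (G.verts ∪ H.verts)
    (G.edges ∪ H.edges ∪ ((Finset.powersetCard r (G.verts ∪ H.verts)).filter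
      fun e => (e ∩ G.verts).Nonempty ∧ (e ∩ H.verts).Nonempty))

end HGraph

/-- The complete `r`-graph on a vertex set `S`. -/
def completeOn (r : ℕ) (S : Finset ℕ) : HGraph r :=
  HGraph.ofEdges r S (Finset.powersetCard r S)

/-- The `r`-graph on `V` with no edges. -/
def emptyOn (r : ℕ) (V : Finset ℕ) : HGraph r := HGraph.ofEdges r V ∅

/-- The Turán number `ex(n,F)`. -/
noncomputable def exN (r n : ℕ) (F : HGraph r) : ℕ :=
  sSup {m | ∃ H : HGraph r, H.verts.card = n ∧ ¬ F.IsCopyIn H ∧ H.edges.card = m}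

/-- `d(n,F) = r·ex(n,F)/n`. -/
noncomputable def dN (r n : ℕ) (F : HGraph r) : ℝ := (r : ℝ) * (exN r n F : ℝ) / (n : ℝ)

/-- `δ(n,F) = ex(n,F) − ex(n−1,F)` (as a real number). -/
noncomputable def deltaN (r n : ℕ) (F : HGraph r) : ℝ := (exN r n F : ℝ) - (exN r (n-1) F : ℝ)

/-- `x` is the Turán density `π(F)`, i.e. the limit of `ex(n,F)/C(n,r)`. -/
def HasTuranDensity (r : ℕ) (F : HGraph r) (x : ℝ) : Prop :=
  Tendsto (fun n : ℕ => (exN r n F : ℝ) / (n.choose r : ℝ)) atTop (nhds x)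

/-- `ex(n,(t+1)F)`: the maximum number of edges of an `n`-vertex `r`-graph with no
`t+1` pairwise vertex-disjoint copies of `F`. -/
noncomputable def exMatchN (r n t : ℕ) (F : HGraph r) : ℕ :=
  sSup {m | ∃ H : HGraph r, H.verts.card = n ∧ ¬ F.HasMatching H (t+1) ∧ H.edges.card = m}

/-- `H ∈ EX(n,F)`. -/
def IsExtremalFree (r n : ℕ) (F H : HGraph r) : Prop :=
  H.verts.card = n ∧ ¬ F.IsCopyIn H ∧ H.edges.card = exN r n F

/-- `H ∈ EX(n,(t+1)F)`. -/
def IsExtremalMatchingFree (r n t : ℕ) (F H : HGraph r) : Prop :=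
  H.verts.card = n ∧ ¬ F.HasMatching H (t+1) ∧ H.edges.card = exMatchN r n t F

/-- `F` is `(f1, f2)`-bounded at `n`. -/
def BoundedAt (r n : ℕ) (F : HGraph r) (f1 f2 : ℝ) : Prop :=
  ∀ H : HGraph r, H.verts.card = n → ¬ F.IsCopyIn H →
    dN r n F - f1 ≤ H.avgDeg → (H.maxDeg : ℝ) ≤ dN r n F + f2

/-- `ex(·,F)` is `g`-smooth at `n`: `|δ(n,F) − d(n−1,F)| ≤ g(n)`. -/
def SmoothAt (r n : ℕ) (F : HGraph r) (g : ℝ) : Prop :=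
  |deltaN r n F - dN r (n-1) F| ≤ g

/-- The collection `H 0, …, H t` (on a common vertex set) has a rainbow `F`-matching. -/
def HasRainbowMatching (r t : ℕ) (F : HGraph r) (H : Fin (t+1) → HGraph r) : Prop :=
  ∃ S : Fin (t+1) → Finset ℕ,
    (∀ i, S i ⊆ (H i).verts ∧ (S i).card = F.verts.card) ∧
    (∀ i j, i ≠ j → Disjoint (S i) (S j)) ∧
    ∀ i, F.IsCopyIn ((H i).induce (S i))

/-!  Patterns -/

/-- An `r`-uniform pattern: a finite index set together with a collection of
`r`-multisets on it. -/
structure Pattern (r : ℕ) where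
  idx : Finset ℕ
  mE : Finset (Multiset ℕ)
  card_eq : ∀ s ∈ mE, Multiset.card s = r
  mem_idx : ∀ s ∈ mE, ∀ i ∈ s, i ∈ idx

namespace Pattern

variable {r : ℕ}

/-- The pattern `P − i`. -/
def erase (P : Pattern r) (i : ℕ) : Pattern r where
  idx := P.idx.erase i
  mE := P.mE.filter fun s => i ∉ s
  card_eq := fun s hs => P.card_eq s (Finset.mem_filter.mp hs).1
  mem_idx := by
    intro s hs j hj
    have h1 := Finset.mem_filter.mp hs
    refine Finset.mem_erase.mpr ⟨?_, P.mem_idx s h1.1 j hj⟩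
    rintro rfl
    exact h1.2 hj

/-- `H` is a `P`-construction: a blowup of the pattern `P`. -/
def IsConstruction (P : Pattern r) (H : HGraph r) : Prop :=
  ∃ part : ℕ → ℕ, (∀ v ∈ H.verts, part v ∈ P.idx) ∧
    ∀ e : Finset ℕ, e ∈ H.edges ↔ (e ⊆ H.verts ∧ e.card = r ∧ Multiset.map part e.val ∈ P.mE)

/-- `H` is a `P`-subconstruction: a subgraph of a `P`-construction. -/
def IsSubconstruction (P : Pattern r) (H : HGraph r) : Prop :=
  ∃ G : HGraph r, P.IsConstruction G ∧ H.verts ⊆ G.verts ∧ H.edges ⊆ G.edges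

end Pattern

/-- `Λ(P,n)`: the maximum number of edges of an `n`-vertex `P`-construction. -/
noncomputable def patEx (r : ℕ) (P : Pattern r) (n : ℕ) : ℕ :=
  sSup {m | ∃ H : HGraph r, P.IsConstruction H ∧ H.verts.card = n ∧ H.edges.card = m}

/-- The Lagrangian `λ(P) = lim Λ(P,n)/C(n,r)`. -/
noncomputable def patLagrangian (r : ℕ) (P : Pattern r) : ℝ :=
  limUnder atTop fun n : ℕ => (patEx r P n : ℝ) / (n.choose r : ℝ)

/-- The pattern `P` is minimal: `λ(P−i) < λ(P)` for all `i`. -/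
def Pattern.Minimal {r : ℕ} (P : Pattern r) : Prop :=
  ∀ i ∈ P.idx, patLagrangian r (P.erase i) < patLagrangian r P

/-- `(F,P)` is a Turán pair. -/
def IsTuranPair (r : ℕ) (F : HGraph r) (P : Pattern r) : Prop :=
  (∀ H : HGraph r, P.IsConstruction H → ¬ F.IsCopyIn H) ∧
  (∀ H : HGraph r, ¬ F.IsCopyIn H → H.edges.card = exN r H.verts.card F →
    P.IsConstruction H)

/-- `F` is edge-stable with respect to `P` (with Turán density `π`). -/
def EdgeStable (r : ℕ) (F : HGraph r) (P : Pattern r) (π : ℝ) : Prop :=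
  ∀ δ : ℝ, 0 < δ → ∃ N₀ : ℕ, ∃ ζ : ℝ, 0 < ζ ∧
    ∀ H : HGraph r, N₀ ≤ H.verts.card → ¬ F.IsCopyIn H →
      (π - ζ) * (H.verts.card.choose r : ℝ) ≤ (H.edges.card : ℝ) →
      ∃ H' : HGraph r, H'.verts ⊆ H.verts ∧ H'.edges ⊆ H.edges ∧
        (π - δ) * (H.verts.card.choose r : ℝ) ≤ (H'.edges.card : ℝ) ∧
        P.IsSubconstruction H'

/-- `F` is weakly vertex-extendable with respect to `P` (with Turán density `π`). -/
def WeaklyVertexExtendable (r : ℕ) (F : HGraph r) (P : Pattern r) (π : ℝ) : Prop :=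
  ∀ δ : ℝ, 0 < δ → ∃ N₀ : ℕ, ∃ ζ : ℝ, 0 < ζ ∧
    ∀ H : HGraph r, N₀ ≤ H.verts.card → ¬ F.IsCopyIn H →
      (π - ζ) * (((H.verts.card - 1).choose (r-1) : ℕ) : ℝ) ≤ (H.minDeg : ℝ) →
      ∀ v ∈ H.verts, P.IsSubconstruction (H.deleteVert v) →
        (H.deg v : ℝ) ≤ (π + δ) * (((H.verts.card - 1).choose (r-1) : ℕ) : ℝ)

/-- `F` is degree-stable with respect to `P` (with Turán density `π`). -/
def DegreeStable (r : ℕ) (F : HGraph r) (P : Pattern r) (π : ℝ) : Prop :=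
  ∃ ζ : ℝ, 0 < ζ ∧ ∃ N₀ : ℕ,
    ∀ H : HGraph r, N₀ ≤ H.verts.card → ¬ F.IsCopyIn H →
      (π - ζ) * (((H.verts.card - 1).choose (r-1) : ℕ) : ℝ) ≤ (H.minDeg : ℝ) →
      P.IsSubconstruction H

/-!  Concrete constructions -/

/-- The generalized Turán graph `T_r(·,ℓ)` on vertex set `V` (parts are residue
classes mod `ℓ`; on an interval these are balanced). -/
def turanOn (r ℓ : ℕ) (V : Finset ℕ) : HGraph r :=
  HGraph.ofEdges r V ((Finset.powersetCard r V).filter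
    fun e => ∀ u ∈ e, ∀ v ∈ e, u % ℓ = v % ℓ → u = v)

/-- The `r`-graph on `V₁ ∪ V₂` whose edges are all `r`-sets meeting both parts. -/
def crossOn (r : ℕ) (V₁ V₂ : Finset ℕ) : HGraph r :=
  HGraph.ofEdges r (V₁ ∪ V₂) ((Finset.powersetCard r (V₁ ∪ V₂)).filter
    fun e => (e ∩ V₁).Nonempty ∧ (e ∩ V₂).Nonempty)

/-- The `r`-graph on `V₁ ∪ V₂` whose edges are all `r`-sets meeting `V₁` in an odd
number of vertices. -/
def oddCross (r : ℕ) (V₁ V₂ : Finset ℕ) : HGraph r :=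
  HGraph.ofEdges r (V₁ ∪ V₂) ((Finset.powersetCard r (V₁ ∪ V₂)).filter
    fun e => Odd (e ∩ V₁).card)

/-- The Fano plane. -/
def fano : HGraph 3 :=
  HGraph.ofEdges 3 (Finset.Icc 1 7)
    {({1,2,3} : Finset ℕ), {3,4,5}, {5,6,1}, {1,7,4}, {2,7,5}, {3,7,6}, {2,4,6}}

/-- The generalized triangle `𝕋_r`, with edges `{1,…,r}`, `{1,…,r−1,r+1}` and
`{r,…,2r−1}`. -/
def genTri (r : ℕ) : HGraph r :=
  HGraph.ofEdges r (Finset.Icc 1 (2*r - 1))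
    {Finset.Icc 1 r, Finset.Icc 1 (r-1) ∪ {r+1}, Finset.Icc r (2*r - 1)}

/-- `G` is a blowup of the `r`-graph `W` (viewing `W` as a pattern). -/
def IsBlowupOf {r : ℕ} (W G : HGraph r) : Prop :=
  ∃ part : ℕ → ℕ, (∀ v ∈ G.verts, part v ∈ W.verts) ∧
    ∀ e : Finset ℕ, e ∈ G.edges ↔
      (e ⊆ G.verts ∧ e.card = r ∧ ∃ f ∈ W.edges, Multiset.map part e.val = f.val)

/-- The expansion `H^F` of an `r`-graph `F`: for every pair of vertices not covered
by an edge of `F`, add an edge consisting of this pair plus `r−2` new vertices,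
these sets of new vertices being pairwise disjoint. -/
def HGraph.expansion {r : ℕ} (F : HGraph r) : HGraph r :=
  HGraph.ofEdges r
    (F.verts ∪ (((F.verts ×ˢ F.verts).filter fun p =>
        p.1 < p.2 ∧ ∀ e ∈ F.edges, ¬ (p.1 ∈ e ∧ p.2 ∈ e)).biUnion fun p =>
      (Finset.range (r-2)).image fun s =>
        (F.verts.sup id + 1) + (p.1 * (F.verts.sup id + 1) + p.2) * r + s))
    (F.edges ∪ (((F.verts ×ˢ F.verts).filter fun p =>
        p.1 < p.2 ∧ ∀ e ∈ F.edges, ¬ (p.1 ∈ e ∧ p.2 ∈ e)).image fun p =>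
      insert p.1 (insert p.2 ((Finset.range (r-2)).image fun s =>
        (F.verts.sup id + 1) + (p.1 * (F.verts.sup id + 1) + p.2) * r + s))))

/-- A `2`-graph is a tree on `k` vertices: `k` vertices, `k−1` edges, connected. -/
def IsTreeGraph (k : ℕ) (T : HGraph 2) : Prop :=
  T.verts.card = k ∧ T.edges.card = k - 1 ∧
  ∀ S : Finset ℕ, S ⊆ T.verts → S.Nonempty → S ≠ T.verts →
    ∃ e ∈ T.edges, (e ∩ S).Nonempty ∧ (e \ S).Nonempty

/-- `T` satisfies the Erdős–Sós property for `k`: every graph with average degree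
greater than `k−2` contains `T`. -/
def ErdosSos (k : ℕ) (T : HGraph 2) : Prop :=
  ∀ G : HGraph 2, ((k : ℝ) - 2) * (G.verts.card : ℝ) < 2 * (G.edges.card : ℝ) →
    T.IsCopyIn G

/-- The `(r−2)`-expansion `Exp(T)` of a `2`-graph `T`: enlarge every edge by one
common fixed set of `r−2` new vertices. -/
def expTree (r : ℕ) (T : HGraph 2) : HGraph r :=
  HGraph.ofEdges r
    (T.verts ∪ ((Finset.range (r-2)).image fun s => T.verts.sup id + 1 + s))
    (T.edges.image fun e =>
      e ∪ ((Finset.range (r-2)).image fun s => T.verts.sup id + 1 + s))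

/-- The chromatic number of a `2`-graph. -/
noncomputable def chrom (F : HGraph 2) : ℕ :=
  sInf {k | ∃ c : ℕ → ℕ, (∀ v ∈ F.verts, c v < k) ∧
    ∀ e ∈ F.edges, ∀ u ∈ e, ∀ v ∈ e, u ≠ v → c u ≠ c v}

/-- A graph is edge-critical if deleting some edge lowers its chromatic number. -/
def EdgeCritical (F : HGraph 2) : Prop :=
  ∃ e ∈ F.edges, chrom (HGraph.ofEdges 2 F.verts (F.edges.erase e)) < chrom F

/-- `H` is semibipartite: the vertex set splits into `V₁ ∪ V₂` so that every edge
has exactly one vertex in `V₁`. -/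
def Semibipartite (r : ℕ) (H : HGraph r) : Prop :=
  ∃ V₁ ⊆ H.verts, ∀ e ∈ H.edges, (e ∩ V₁).card = 1

/-- `H` is a `K_ℓ^r`-subconstruction, i.e. an `ℓ`-partite `r`-graph. -/
def IsKlSub (r ℓ : ℕ) (H : HGraph r) : Prop :=
  ∃ f : ℕ → ℕ, (∀ v ∈ H.verts, f v < ℓ) ∧
    ∀ e ∈ H.edges, ∀ u ∈ e, ∀ v ∈ e, f u = f v → u = v

/-- The Lagrangian `λ(W)` of an `r`-graph `W`, viewing `W` as a pattern. -/
noncomputable def hgLagrangian (r : ℕ) (W : HGraph r) : ℝ :=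
  limUnder atTop fun n : ℕ =>
    ((sSup {m | ∃ G : HGraph r, IsBlowupOf W G ∧ G.verts.card = n ∧ G.edges.card = m} : ℕ) : ℝ)
      / (n.choose r : ℝ)

/-- The `r`-graph `B(r,ℓ+1)`. -/
def BGraph (r ℓ : ℕ) : HGraph r :=
  HGraph.ofEdges r (Finset.Icc 1 (ℓ+1))
    (insert (Finset.Icc 1 r)
      ((Finset.powersetCard r (Finset.Icc 2 (ℓ+1))).filter
        fun e => (e ∩ Finset.Icc 2 r).card ≤ 1))

/-- The `r`-uniform matching of size two, `M_2^r`. -/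
def matching2 (r : ℕ) : HGraph r :=
  HGraph.ofEdges r (Finset.Icc 1 (2*r)) {Finset.Icc 1 r, Finset.Icc (r+1) (2*r)}

/-- The expanded triangle `𝓒_3^{2r}`. -/
def expandedTriangle (r : ℕ) : HGraph (2*r) :=
  HGraph.ofEdges (2*r) (Finset.Icc 1 (3*r))
    {Finset.Icc 1 (2*r), Finset.Icc (r+1) (3*r), Finset.Icc 1 r ∪ Finset.Icc (2*r+1) (3*r)}

/-- The `4`-graph `𝔽_{4,3}`. -/
def F43 : HGraph 4 :=
  HGraph.ofEdges 4 (Finset.Icc 1 7)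
    {({1,2,3,4} : Finset ℕ), {1,2,3,5}, {1,2,3,6}, {1,2,3,7}, {4,5,6,7}}

/-- The `3`-graph `𝔽_{3,2}`. -/
def F32 : HGraph 3 :=
  HGraph.ofEdges 3 (Finset.Icc 1 5)
    {({1,2,3} : Finset ℕ), {1,2,4}, {1,2,5}, {3,4,5}}

/-- `H` contains pairwise vertex-disjoint copies of `F i`, `ts i` many of each. -/
def HasMixedMatching (r k : ℕ) (F : Fin k → HGraph r) (ts : Fin k → ℕ)
    (H : HGraph r) : Prop :=
  ∃ S : (i : Fin k) → Fin (ts i) → Finset ℕ,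
    (∀ i j, S i j ⊆ H.verts ∧ (S i j).card = (F i).verts.card) ∧
    (∀ p q : Σ i : Fin k, Fin (ts i), p ≠ q → Disjoint (S p.1 p.2) (S q.1 q.2)) ∧
    ∀ i j, (F i).IsCopyIn (H.induce (S i j))

/-- `ex(n, ⊔ᵢ tᵢ Fᵢ)`. -/
noncomputable def exMixedN (r k : ℕ) (F : Fin k → HGraph r) (ts : Fin k → ℕ)
    (n : ℕ) : ℕ :=
  sSup {m | ∃ H : HGraph r, H.verts.card = n ∧ ¬ HasMixedMatching r k F ts H ∧
    H.edges.card = m}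

/-- `ex(n, {F₁,…,F_k})`. -/
noncomputable def exFamN (r k : ℕ) (F : Fin k → HGraph r) (n : ℕ) : ℕ :=
  sSup {m | ∃ H : HGraph r, H.verts.card = n ∧ (∀ i, ¬ (F i).IsCopyIn H) ∧
    H.edges.card = m}

/-
In a triangle-free 3-graph of almost extremal minimum degree, a largest codegree neighbourhood and
parts of two further ones outside it are three almost independent sets covering almost all
vertices. Assigning every vertex to the class that its link almost avoids makes the 3-graph
tripartite. Deleting vertices of small degree then gives Turán's theorem for `𝕋_3` and its equality
case.

In a 3-graph without `t + 1` disjoint copies of `𝕋_3`, let `A` be the set of vertices whose degree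
exceeds the largest one possible in a triangle-free 3-graph, and take a maximal family of disjoint
copies avoiding `A`. As long as a vertex of `A` remains, deleting a few others leaves a copy of
`𝕋_3`, so the family has at most `t - #A` members. What lies outside `A` and the family is
triangle-free, and counting edges forces `#A = t` and the family to be empty. The equality case of
Turán's theorem then determines the 3-graph.
-/

section

open Finset

variable {α : Type*}

/- The sum of `#(N b) + #(N c)` over all ordered adjacent pairs is `2 ∑ #(N b) ^ 2`, which the
Cauchy–Schwarz inequality bounds below. -/
lemma exists_adj_two_mul_sum_card_le (D : Finset α) (N : α → Finset α)
    (hN : ∀ y ∈ D, N y ⊆ D) (hsymm : ∀ b ∈ D, ∀ c ∈ N b, b ∈ N c)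
    (hpos : 0 < ∑ y ∈ D, #(N y)) :
    ∃ b ∈ D, ∃ c ∈ N b, 2 * ∑ y ∈ D, #(N y) ≤ #D * (#(N b) + #(N c)) := by
  by_contra! hcon
  have hswap : ∑ b ∈ D, ∑ c ∈ N b, #(N c) = ∑ b ∈ D, ∑ _c ∈ N b, #(N b) :=
    sum_comm' fun b c => ⟨fun h => ⟨hsymm b h.1 c h.2, hN b h.1 h.2⟩,
      fun h => ⟨hN c h.2 h.1, hsymm c h.2 b h.1⟩⟩
  have hdouble : ∑ b ∈ D, ∑ c ∈ N b, #D * (#(N b) + #(N c)) = 2 * (#D * ∑ b ∈ D, #(N b) ^ 2) := by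
    simp only [← mul_sum, sum_add_distrib, hswap, sum_const, smul_eq_mul, ← sq]
    ring
  have hlt : ∑ b ∈ D, ∑ c ∈ N b, #D * (#(N b) + #(N c)) <
      ∑ b ∈ D, ∑ c ∈ N b, 2 * ∑ y ∈ D, #(N y) := by
    obtain ⟨b, hb, hb'⟩ : ∃ b ∈ D, 0 < #(N b) := by
      simpa only [sum_pos_iff] using hpos
    exact sum_lt_sum (fun b hb => sum_le_sum fun c hc => (hcon b hb c hc).le)
      ⟨b, hb, sum_lt_sum_of_nonempty (card_pos.1 hb') fun c hc => hcon b hb c hc⟩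
  have hcauchy : (∑ b ∈ D, #(N b)) ^ 2 ≤ #D * ∑ b ∈ D, #(N b) ^ 2 := sq_sum_le_card_mul_sum_sq
  simp only [sum_const, smul_eq_mul, ← sum_mul] at hlt
  nlinarith

lemma card_le_two_of_subset_pair {s : Finset α} {x y : α} (h : ∀ w ∈ s, w = x ∨ w = y) :
    #s ≤ 2 := by
  classical
  exact (card_le_card fun w hw => by simpa using h w hw : #s ≤ #{x, y}).trans card_le_two

lemma fin_three_add (i : Fin 3) :
    i + 1 + 1 = i + 2 ∧ i + 1 + 2 = i ∧ i + 2 + 1 = i ∧ i + 2 + 2 = i + 1 := by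
  decide +revert

@[to_additive]
lemma prod_fin_three {M : Type*} [CommMonoid M] (f : Fin 3 → M) (i : Fin 3) :
    ∏ j, f j = f i * f (i + 1) * f (i + 2) := by
  rw [← Equiv.prod_comp (Equiv.addLeft i), Fin.prod_univ_three]
  simp

/-- The product of the sizes of a balanced partition of `m` points into three classes, which is the
number of edges of the generalized Turán 3-graph `T_3(m, 3)`. -/
def balancedProd (m : ℕ) : ℕ := ∏ i : Fin 3, (m + i) / 3

lemma balancedProd_succ (m : ℕ) :
    balancedProd (m + 1) = balancedProd m + (m + 1) / 3 * ((m + 2) / 3) := by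
  have : (m + 3) / 3 = m / 3 + 1 := by omega
  simp only [balancedProd, Fin.prod_univ_three, Fin.val_zero, Fin.val_one, Fin.val_two, add_zero,
    add_assoc, Nat.reduceAdd, this]
  ring

lemma mul_le_mul_of_add_le_add {a b c d : ℕ} (hcd : c ≤ d) (hdc : d ≤ c + 1)
    (h : a + b ≤ c + d) : a * b ≤ c * d := by
  have hsq : 4 * (a * b) ≤ (c + d) ^ 2 :=
    (by linarith [four_mul_le_sq_add a b] : 4 * (a * b) ≤ (a + b) ^ 2).trans (by gcongr)
  obtain rfl | rfl : d = c ∨ d = c + 1 := by omega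
  all_goals
    by_contra! hlt
    nlinarith

lemma add_eq_add_of_mul_eq_mul {a b c d : ℕ} (hcd : c ≤ d) (hdc : d ≤ c + 1) (hc : 0 < c)
    (h : a + b ≤ c + d) (hmul : a * b = c * d) : a + b = c + d ∧ a ≤ b + 1 ∧ b ≤ a + 1 := by
  have hsum : a + b = c + d := by
    by_contra hne
    have := mul_le_mul_of_add_le_add (c := d - 1) (d := c) (a := a) (b := b) (by omega) (by omega)
      (by omega)
    have : (d - 1) * c < c * d := by
      rw [mul_comm]
      exact Nat.mul_lt_mul_of_pos_left (by omega) hc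
    omega
  refine ⟨hsum, ?_, ?_⟩
  all_goals
    obtain rfl | rfl : d = c ∨ d = c + 1 := by omega
    all_goals
      by_contra! hlt
      nlinarith

lemma exists_prod_eq_prod_add {p : Fin 3 → ℕ} {m : ℕ} (hp : ∑ i, p i = m + 1) :
    ∃ i, ∃ q : Fin 3 → ℕ, ∑ j, q j = m ∧ ∏ j, p j = ∏ j, q j + p (i + 1) * p (i + 2) ∧
      p (i + 1) ≤ p i ∧ p (i + 2) ≤ p i := by
  obtain ⟨i, hi⟩ := Finite.exists_max p
  have hsum := sum_fin_three p i
  obtain ⟨k, hk⟩ : ∃ k, p i = k + 1 := ⟨p i - 1, by have := hi (i + 1); have := hi (i + 2); omega⟩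
  have hne : i + 1 ≠ i ∧ i + 2 ≠ i := by
    clear * -
    decide +revert
  refine ⟨i, Function.update p i k, ?_, ?_, hi _, hi _⟩
  · simp only [sum_fin_three _ i, Function.update_self, Function.update_of_ne hne.1,
      Function.update_of_ne hne.2]
    omega
  · simp only [prod_fin_three _ i, Function.update_self, Function.update_of_ne hne.1,
      Function.update_of_ne hne.2, hk]
    ring

lemma prod_le_balancedProd (p : Fin 3 → ℕ) : ∏ i, p i ≤ balancedProd (∑ i, p i) := by
  generalize hm : ∑ i, p i = m
  induction m generalizing p with
  | zero => simp [Finset.sum_eq_zero_iff.1 hm]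
  | succ m ih =>
    obtain ⟨i, q, hq, hprod, hi, hi'⟩ := exists_prod_eq_prod_add hm
    rw [hprod, balancedProd_succ]
    have hsum := sum_fin_three p i
    exact add_le_add (ih q hq) (mul_le_mul_of_add_le_add (by omega) (by omega) (by omega))

lemma exists_perm_of_prod_eq_balancedProd {p : Fin 3 → ℕ} (hp : 3 ≤ ∑ i, p i)
    (h : ∏ i, p i = balancedProd (∑ i, p i)) :
    ∃ σ : Equiv.Perm (Fin 3), ∀ i, p (σ i) = (∑ j, p j + i) / 3 := by
  obtain ⟨m, hm⟩ : ∃ m, ∑ i, p i = m + 1 := ⟨∑ i, p i - 1, by omega⟩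
  obtain ⟨i, q, hq, hprod, hi, hi'⟩ := exists_prod_eq_prod_add hm
  have hsum := sum_fin_three p i
  have hle := prod_le_balancedProd q
  have hle' : p (i + 1) * p (i + 2) ≤ (m + 1) / 3 * ((m + 2) / 3) :=
    mul_le_mul_of_add_le_add (by omega) (by omega) (by omega)
  rw [hprod, hm, balancedProd_succ] at h
  rw [hq] at hle
  have hmul : p (i + 1) * p (i + 2) = (m + 1) / 3 * ((m + 2) / 3) := by omega
  obtain ⟨hadd, hbal⟩ :=
    add_eq_add_of_mul_eq_mul (by omega) (by omega) (by omega) (by omega) hmul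
  have hclose : ∀ j, (m + 1) / 3 ≤ p j ∧ p j ≤ (m + 1) / 3 + 1 := by
    intro j
    obtain rfl | rfl | rfl : j = i ∨ j = i + 1 ∨ j = i + 2 := by
      clear * -
      decide +revert
    all_goals omega
  have hmono : Monotone (p ∘ Tuple.sort p) := Tuple.monotone_sort p
  have h01 : p (Tuple.sort p 0) ≤ p (Tuple.sort p 1) := hmono (by decide)
  have h12 : p (Tuple.sort p 1) ≤ p (Tuple.sort p 2) := hmono (by decide)
  have hsort : ∑ j, p (Tuple.sort p j) = m + 1 := by rw [Equiv.sum_comp, hm]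
  rw [Fin.sum_univ_three] at hsort
  have h0 := hclose (Tuple.sort p 0)
  have h2 := hclose (Tuple.sort p 2)
  refine ⟨Tuple.sort p, fun j => ?_⟩
  rw [hm]
  fin_cases j <;> simp <;> omega

lemma exists_balancedProd_eq (m : ℕ) : ∃ k,
    m = 3 * k ∧ balancedProd m = k * k * k ∨ m = 3 * k + 1 ∧ balancedProd m = k * k * (k + 1) ∨
      m = 3 * k + 2 ∧ balancedProd m = k * (k + 1) * (k + 1) := by
  obtain ⟨k, rfl | rfl | rfl⟩ : ∃ k, m = 3 * k ∨ m = 3 * k + 1 ∨ m = 3 * k + 2 :=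
    ⟨m / 3, by omega⟩
  all_goals
    refine ⟨k, ?_⟩
    simp only [balancedProd, Fin.prod_univ_three, Fin.val_zero, Fin.val_one, Fin.val_two]
  · exact .inl ⟨trivial, by congr <;> omega⟩
  · exact .inr (.inl ⟨trivial, by congr <;> omega⟩)
  · exact .inr (.inr ⟨trivial, by congr <;> omega⟩)

lemma twentySeven_mul_balancedProd_le (m : ℕ) : 27 * balancedProd m ≤ m ^ 3 := by
  obtain ⟨k, ⟨rfl, h⟩ | ⟨rfl, h⟩ | ⟨rfl, h⟩⟩ := exists_balancedProd_eq m <;> rw [h] <;> nlinarith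

lemma pow_three_le_balancedProd (m : ℕ) : m ^ 3 ≤ 27 * balancedProd m + 9 * m := by
  obtain ⟨k, ⟨rfl, h⟩ | ⟨rfl, h⟩ | ⟨rfl, h⟩⟩ := exists_balancedProd_eq m <;> rw [h] <;> nlinarith

lemma sub_pow_three_le_balancedProd {n t : ℕ} (ht : t ≤ n) :
    (n - t : ℝ) ^ 3 ≤ 27 * balancedProd (n - t) + 9 * (n - t) := by
  rw [← Nat.cast_sub ht]
  exact_mod_cast pow_three_le_balancedProd (n - t)

lemma le_of_cast_le_mul {n t : ℕ} {c : ℝ} (hc : c ≤ 1) (ht : (t : ℝ) ≤ c * n) : t ≤ n := by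
  exact_mod_cast ht.trans (mul_le_of_le_one_left (Nat.cast_nonneg n) hc)

lemma card_eq_sum_card_color {ι : Type*} [Fintype ι] [DecidableEq ι] (f : α → ι) (V : Finset α) :
    #V = ∑ i, #{x ∈ V | f x = i} :=
  card_eq_sum_card_fiberwise fun _ _ => mem_univ _

lemma exists_bijOn_of_card_fiber_eq {α β ι : Type*} [Nonempty β] [DecidableEq ι] {V : Finset α}
    {W : Finset β} {c : α → ι} {d : β → ι} (h : ∀ o, #{x ∈ V | c x = o} = #{y ∈ W | d y = o}) :
    ∃ f : α → β, Set.BijOn f V W ∧ ∀ x ∈ V, d (f x) = c x := by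
  have hfiber : ∀ o, ∃ f : α → β, Set.BijOn f {x ∈ V | c x = o} {y ∈ W | d y = o} := fun o => by
    simp only [← coe_filter]
    refine (finite_toSet _).exists_bijOn_of_encard_eq ?_
    simp only [Set.encard_coe_eq_coe_finsetCard, h o]
  choose f hf using hfiber
  have hmem : ∀ x ∈ V, f (c x) x ∈ W ∧ d (f (c x) x) = c x := fun x hx =>
    (hf (c x)).mapsTo ⟨hx, rfl⟩
  refine ⟨fun x => f (c x) x, ⟨fun x hx => (hmem x hx).1, ?_, ?_⟩, fun x hx => (hmem x hx).2⟩
  · intro x hx y hy (hxy : f (c x) x = f (c y) y)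
    have hc : c x = c y := by rw [← (hmem x hx).2, hxy, (hmem y hy).2]
    rw [hc] at hxy
    exact (hf (c y)).injOn ⟨hx, hc⟩ ⟨hy, rfl⟩ hxy
  · intro y hy
    obtain ⟨x, ⟨hx, hcx⟩, hxy⟩ := (hf (d y)).surjOn ⟨hy, rfl⟩
    exact ⟨x, hx, by simpa only [hcx] using hxy⟩

lemma cast_descFactorial_three (m : ℕ) :
    (m.descFactorial 3 : ℝ) = m * (m - 1) * (m - 2) := by
  rw [← descPochhammer_eval_eq_descFactorial]
  simp [descPochhammer_succ_right]

/-- A 3-graph on the vertex type `α`, encoded by its adjacency relation on ordered triples. It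
carries no vertex set: every notion below is relative to a finset `V` of vertices, which makes
passing to induced subgraphs free. -/
structure TripleSystem (α : Type*) where
  Rel : α → α → α → Prop
  swap : ∀ {x y z}, Rel x y z → Rel y x z
  rotate : ∀ {x y z}, Rel x y z → Rel y z x
  ne : ∀ {x y z}, Rel x y z → x ≠ y

namespace TripleSystem

variable (G : TripleSystem α) {V W S B C D : Finset α} {v x y z : α}

open scoped Classical in
/-- The codegree neighbourhood of the pair `x`, `y` in `V`. -/
noncomputable def nbhd (V : Finset α) (x y : α) : Finset α := {z ∈ V | G.Rel x y z}

open scoped Classical in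
/-- The number of ordered pairs of `B × C` in the link of `v`. -/
noncomputable def linkCount (B C : Finset α) (v : α) : ℕ := #{p ∈ B ×ˢ C | G.Rel v p.1 p.2}

/-- The number of ordered pairs in the link of `v`, which is twice the usual degree of `v`. -/
noncomputable def degree (V : Finset α) (v : α) : ℕ := G.linkCount V V v

open scoped Classical in
/-- The ordered triples of vertices of `V` forming an edge. -/
noncomputable def triples (V : Finset α) : Finset (α × α × α) :=
  {p ∈ V ×ˢ V ×ˢ V | G.Rel p.1 p.2.1 p.2.2}

/-- The number of ordered triples of `V` forming an edge, which is six times the number of edges. -/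
noncomputable def tripleCount (V : Finset α) : ℕ := #(G.triples V)

/-- `V` spans no generalized triangle: the symmetric difference `{r, s}` of two edges `pqr`,
`pqs` is contained only in edges `rsw` with `w ∈ {p, q}`. -/
def TriangleFree (V : Finset α) : Prop :=
  ∀ p ∈ V, ∀ q ∈ V, ∀ r ∈ V, ∀ s ∈ V, ∀ w ∈ V,
    G.Rel p q r → G.Rel p q s → r ≠ s → G.Rel r s w → w = p ∨ w = q

/-- Every pair of vertices of `S` has codegree at most two in `V`. In a triangle-free 3-graph this
holds for codegree neighbourhoods, and it replaces independence for them. -/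
def IsLight (V S : Finset α) : Prop := ∀ r ∈ S, ∀ s ∈ S, #(G.nbhd V r s) ≤ 2

open scoped Classical in
/-- The number of ordered pairs in the link of `v` that have codegree at most two. -/
noncomputable def lightCount (V : Finset α) (v : α) : ℕ :=
  #{p ∈ V ×ˢ V | G.Rel v p.1 p.2 ∧ #(G.nbhd V p.1 p.2) ≤ 2}

variable {G}

lemma Rel.swap_right (h : G.Rel x y z) : G.Rel x z y := G.rotate (G.swap h)

lemma Rel.ne_last (h : G.Rel x y z) : x ≠ z := G.ne h.swap_right

lemma Rel.ne_right (h : G.Rel x y z) : y ≠ z := G.ne (G.rotate h)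

lemma mem_nbhd : z ∈ G.nbhd V x y ↔ z ∈ V ∧ G.Rel x y z := by simp [nbhd]

lemma nbhd_subset : G.nbhd V x y ⊆ V := fun _ hz => (mem_nbhd.1 hz).1

lemma nbhd_mono (h : W ⊆ V) (x y : α) : G.nbhd W x y ⊆ G.nbhd V x y :=
  fun _ hz => mem_nbhd.2 ⟨h (mem_nbhd.1 hz).1, (mem_nbhd.1 hz).2⟩

lemma nbhd_comm (V : Finset α) (x y : α) : G.nbhd V x y = G.nbhd V y x := by
  ext z
  simp only [mem_nbhd]
  exact and_congr_right fun _ => ⟨G.swap, G.swap⟩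

lemma linkCount_eq_sum (B C : Finset α) (v : α) :
    G.linkCount B C v = ∑ b ∈ B, #(G.nbhd C v b) := by
  simp only [linkCount, nbhd, card_filter, sum_product]

lemma linkCount_comm (B C : Finset α) (v : α) : G.linkCount B C v = G.linkCount C B v := by
  classical
  simp only [linkCount, card_filter, sum_product]
  rw [sum_comm]
  refine sum_congr rfl fun c _ => sum_congr rfl fun b _ => ?_
  exact if_congr ⟨Rel.swap_right, Rel.swap_right⟩ rfl rfl

lemma linkCount_mono {B' C' : Finset α} (hB : B ⊆ B') (hC : C ⊆ C') (v : α) :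
    G.linkCount B C v ≤ G.linkCount B' C' v := by
  classical
  exact card_le_card (filter_subset_filter _ (product_subset_product hB hC))

lemma linkCount_le_card_mul_card (B C : Finset α) (v : α) : G.linkCount B C v ≤ #B * #C := by
  classical
  exact (card_filter_le _ _).trans (card_product _ _).le

lemma TriangleFree.mono (h : G.TriangleFree V) (hW : W ⊆ V) : G.TriangleFree W :=
  fun p hp q hq r hr s hs w hw => h p (hW hp) q (hW hq) r (hW hr) s (hW hs) w (hW hw)

lemma sum_lightCount_le (V : Finset α) : ∑ v ∈ V, G.lightCount V v ≤ 2 * #V ^ 2 := by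
  classical
  simp only [lightCount, card_filter]
  rw [sum_comm]
  calc ∑ p ∈ V ×ˢ V, ∑ v ∈ V, (if G.Rel v p.1 p.2 ∧ #(G.nbhd V p.1 p.2) ≤ 2 then 1 else 0)
      ≤ ∑ p ∈ V ×ˢ V, 2 := by
        refine sum_le_sum fun p _ => ?_
        rw [← card_filter]
        by_cases hp : #(G.nbhd V p.1 p.2) ≤ 2
        · refine (card_le_card fun v hv => ?_).trans hp
          rw [mem_filter] at hv
          exact mem_nbhd.2 ⟨hv.1, G.rotate hv.2.1⟩
        · simp [hp]
    _ = 2 * #V ^ 2 := by rw [sum_const, card_product, smul_eq_mul]; ring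

lemma exists_card_mul_lightCount_le (hS : S ⊆ V) (hne : S.Nonempty) :
    ∃ v ∈ S, #S * G.lightCount V v ≤ 2 * #V ^ 2 := by
  obtain ⟨v, hv, hmin⟩ := exists_min_image S (G.lightCount V) hne
  refine ⟨v, hv, ?_⟩
  calc #S * G.lightCount V v ≤ ∑ w ∈ S, G.lightCount V w := by
        simpa using card_nsmul_le_sum S _ _ hmin
    _ ≤ ∑ w ∈ V, G.lightCount V w := sum_le_sum_of_subset hS
    _ ≤ 2 * #V ^ 2 := sum_lightCount_le V

lemma IsLight.linkCount_le (hS : G.IsLight V S) (hB : B ⊆ S) (hC : C ⊆ V) (hv : v ∈ S) :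
    G.linkCount B C v ≤ 2 * #B := by
  rw [linkCount_eq_sum, mul_comm]
  exact sum_le_card_nsmul _ _ _ fun b hb =>
    (card_le_card (nbhd_mono hC _ _)).trans (hS v hv b (hB hb))

lemma IsLight.linkCount_le_lightCount (hS : G.IsLight V S) (hSV : S ⊆ V) (v : α) :
    G.linkCount S S v ≤ G.lightCount V v := by
  refine card_le_card ?_
  rintro ⟨a, b⟩ h
  simp only [mem_filter, mem_product] at h ⊢
  exact ⟨⟨hSV h.1.1, hSV h.1.2⟩, h.2, hS a h.1.1 b h.1.2⟩

lemma TriangleFree.card_nbhd_le_two {r s : α} (h : G.TriangleFree V) (hx : x ∈ V) (hy : y ∈ V)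
    (hr : r ∈ G.nbhd V x y) (hs : s ∈ G.nbhd V x y) (hrs : r ≠ s) : #(G.nbhd V r s) ≤ 2 := by
  rw [mem_nbhd] at hr hs
  refine card_le_two_of_subset_pair (x := x) (y := y) fun w hw => ?_
  rw [mem_nbhd] at hw
  exact h x hx y hy r hr.1 s hs.1 w hw.1 hr.2 hs.2 hrs hw.2

lemma TriangleFree.isLight_nbhd (h : G.TriangleFree V) (hx : x ∈ V) (hy : y ∈ V) :
    G.IsLight V (G.nbhd V x y) := by
  intro r hr s hs
  obtain rfl | hrs := eq_or_ne r s
  · have : G.nbhd V r r = ∅ := eq_empty_of_forall_notMem fun z hz => G.ne (mem_nbhd.1 hz).2 rfl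
    simp [this]
  · exact h.card_nbhd_le_two hx hy hr hs hrs

/- A pair `(b, c)` in both links gives edges `bcv`, `bcv'`, so an edge `vv'w` forces `w = b` or
`w = c`. -/
lemma TriangleFree.not_rel_of_linkCount {v' w : α} (h : G.TriangleFree V) (hB : B ⊆ V)
    (hC : C ⊆ V) (hv : v ∈ V) (hv' : v' ∈ V) (hw : w ∈ V)
    (hlink : #B * #C + #B + #C < G.linkCount B C v + G.linkCount B C v') : ¬ G.Rel v v' w := by
  classical
  intro hR
  set L := {p ∈ B ×ˢ C | G.Rel v p.1 p.2} with hL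
  set L' := {p ∈ B ×ˢ C | G.Rel v' p.1 p.2} with hL'
  have hunion : #(L ∪ L') ≤ #B * #C := by
    rw [← card_product]
    exact card_le_card (union_subset (filter_subset _ _) (filter_subset _ _))
  have hinter : L ∩ L' ⊆ B ×ˢ {w} ∪ {w} ×ˢ C := by
    rintro ⟨b, c⟩ hp
    simp only [hL, hL', mem_inter, mem_filter, mem_product] at hp
    obtain ⟨⟨⟨hb, hc⟩, hvbc⟩, -, hv'bc⟩ := hp
    have hw : w = b ∨ w = c := h b (hB hb) c (hC hc) v hv v' hv' w hw (G.rotate hvbc)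
      (G.rotate hv'bc) (G.ne hR) hR
    simp only [mem_union, mem_product, mem_singleton]
    tauto
  have hcard : #(L ∩ L') ≤ #B + #C := by
    simpa using (card_le_card hinter).trans (card_union_le _ _)
  have hsum : #(L ∪ L') + #(L ∩ L') = G.linkCount B C v + G.linkCount B C v' := by
    convert card_union_add_card_inter L L' <;> simp only [linkCount, hL, hL']
  omega

lemma linkCount_union_left_le [DecidableEq α] (B C D : Finset α) (v : α) :
    G.linkCount (B ∪ C) D v ≤ G.linkCount B D v + G.linkCount C D v := by
  classical
  rw [linkCount, union_product, filter_union]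
  exact card_union_le _ _

lemma linkCount_le_add_sdiff [DecidableEq α] (B D C : Finset α) (v : α) :
    G.linkCount B C v ≤ G.linkCount D C v + G.linkCount (B \ D) C v :=
  calc G.linkCount B C v ≤ G.linkCount (D ∪ B \ D) C v :=
        linkCount_mono (by rw [union_sdiff_self_eq_union]; exact subset_union_right) subset_rfl v
    _ ≤ _ := linkCount_union_left_le _ _ _ v

/-- The situation of the stability theorem: the triangle-free 3-graph on `V` has minimum degree
close to that of a balanced complete tripartite one, in which ordered pairs count `2 / 9 * #V ^ 2`.
The bound on `#V` makes linear error terms negligible. -/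
structure IsDenseFree (G : TripleSystem α) (V : Finset α) : Prop where
  free : G.TriangleFree V
  large : 10 ^ 9 ≤ (#V : ℝ)
  le_degree : ∀ v ∈ V, (2 / 9 - 1 / 10 ^ 5) * (#V : ℝ) ^ 2 ≤ G.degree V v

lemma IsDenseFree.nonempty (h : G.IsDenseFree V) : V.Nonempty := by
  have : (0 : ℝ) < #V := by linarith [h.large]
  exact card_pos.1 (by exact_mod_cast this)

lemma IsLight.degree_le [DecidableEq α] (hS : G.IsLight V S) (hv : v ∈ S) {M : ℕ}
    (hM : ∀ b ∈ V, #(G.nbhd V v b) ≤ M) : G.degree V v ≤ 2 * #S + #(V \ S) * M :=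
  calc G.degree V v ≤ G.linkCount S V v + G.linkCount (V \ S) V v := linkCount_le_add_sdiff _ _ _ _
    _ ≤ 2 * #S + #(V \ S) * M := by
      refine add_le_add (hS.linkCount_le subset_rfl subset_rfl hv) ?_
      rw [linkCount_eq_sum]
      exact sum_le_card_nsmul _ _ _ fun b hb => hM b (sdiff_subset hb)

lemma IsLight.degree_le_add_linkCount_sdiff [DecidableEq α] (hS : G.IsLight V S) (hv : v ∈ S) :
    G.degree V v ≤ 4 * #S + G.linkCount (V \ S) (V \ S) v := by
  have houter : G.degree V v ≤ G.linkCount S V v + G.linkCount (V \ S) V v :=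
    linkCount_le_add_sdiff _ _ _ _
  have hinner : G.linkCount V (V \ S) v ≤ G.linkCount S (V \ S) v + G.linkCount (V \ S) (V \ S) v :=
    linkCount_le_add_sdiff _ _ _ _
  rw [linkCount_comm V] at hinner
  have hSV' := hS.linkCount_le subset_rfl subset_rfl hv
  have hSD := hS.linkCount_le subset_rfl (sdiff_subset : V \ S ⊆ V) hv
  omega

open scoped Classical in
/-- The neighbours of `y` in `D` within the link graph of `v`, restricted to pairs of codegree at
least three. Within a light set there are none. -/
noncomputable def heavyNbhd (G : TripleSystem α) (V D : Finset α) (v y : α) : Finset α :=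
  {z ∈ D | G.Rel v y z ∧ 3 ≤ #(G.nbhd V y z)}

lemma mem_heavyNbhd : z ∈ G.heavyNbhd V D v y ↔ z ∈ D ∧ G.Rel v y z ∧ 3 ≤ #(G.nbhd V y z) := by
  simp [heavyNbhd]

lemma heavyNbhd_subset_nbhd (hD : D ⊆ V) : G.heavyNbhd V D v y ⊆ G.nbhd V v y := fun z hz => by
  rw [mem_heavyNbhd] at hz
  exact mem_nbhd.2 ⟨hD hz.1, hz.2.1⟩

lemma mem_heavyNbhd_comm (hy : y ∈ D) (h : z ∈ G.heavyNbhd V D v y) :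
    y ∈ G.heavyNbhd V D v z := by
  rw [mem_heavyNbhd] at h ⊢
  exact ⟨hy, h.2.1.swap_right, nbhd_comm V y z ▸ h.2.2⟩

lemma linkCount_le_sum_heavyNbhd_add_lightCount (hD : D ⊆ V) (v : α) :
    G.linkCount D D v ≤ ∑ y ∈ D, #(G.heavyNbhd V D v y) + G.lightCount V v := by
  classical
  have hheavy : ∑ y ∈ D, #(G.heavyNbhd V D v y) =
      #{p ∈ D ×ˢ D | G.Rel v p.1 p.2 ∧ 3 ≤ #(G.nbhd V p.1 p.2)} := by
    simp only [heavyNbhd, card_filter, sum_product]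
  rw [hheavy]
  refine (card_le_card ?_).trans (card_union_le _ _)
  rintro ⟨a, b⟩ hab
  simp only [mem_union, mem_filter, mem_product] at hab ⊢
  obtain hlight | hheavy := Nat.lt_or_ge (#(G.nbhd V a b)) 3
  · exact Or.inr ⟨⟨hD hab.1.1, hD hab.1.2⟩, hab.2, Nat.le_of_lt_succ hlight⟩
  · exact Or.inl ⟨hab.1, hab.2, hheavy⟩

lemma TriangleFree.disjoint_heavyNbhd (h : G.TriangleFree V) (hD : D ⊆ V) (hv : v ∈ V) {b c : α}
    (hb : b ∈ D) (hc : c ∈ G.heavyNbhd V D v b) :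
    Disjoint (G.heavyNbhd V D v b) (G.heavyNbhd V D v c) := by
  obtain ⟨hcD, hvbc, hheavy⟩ := mem_heavyNbhd.1 hc
  rw [disjoint_left]
  intro z hzb hzc
  obtain ⟨hzD, hvbz, -⟩ := mem_heavyNbhd.1 hzb
  obtain ⟨-, hvcz, -⟩ := mem_heavyNbhd.1 hzc
  have hlight : #(G.nbhd V b c) ≤ 2 :=
    h.card_nbhd_le_two hv (hD hzD) (mem_nbhd.2 ⟨hD hb, hvbz.swap_right⟩)
      (mem_nbhd.2 ⟨hD hcD, hvcz.swap_right⟩) hvbc.ne_right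
  omega

section MaxCodegree

variable (h : G.IsDenseFree V) (hx : x ∈ V) (hy : y ∈ V)
  (hmax : ∀ a ∈ V, ∀ b ∈ V, #(G.nbhd V a b) ≤ #(G.nbhd V x y))

include h hx hy hmax

lemma IsDenseFree.le_card_nbhd_of_max : (1 / 3 - 1 / 10 ^ 4) * #V ≤ (#(G.nbhd V x y) : ℝ) := by
  classical
  have hn := h.large
  obtain ⟨v, hv⟩ : (G.nbhd V x y).Nonempty := by
    obtain ⟨v, hv⟩ := h.nonempty
    by_contra! hempty
    have hdeg : G.degree V v = 0 := by
      rw [degree, linkCount_eq_sum]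
      exact sum_eq_zero fun b hb => by simpa [hempty] using hmax v hv b hb
    have := h.le_degree v hv
    rw [hdeg, Nat.cast_zero] at this
    nlinarith
  have hvV := nbhd_subset hv
  have hdeg : (G.degree V v : ℝ) ≤
      2 * #(G.nbhd V x y) + (#V - #(G.nbhd V x y)) * #(G.nbhd V x y) := by
    rw [← cast_card_sdiff nbhd_subset]
    exact_mod_cast (h.free.isLight_nbhd hx hy).degree_le hv (hmax v hvV)
  have := h.le_degree v hvV
  by_contra! hlt
  nlinarith

lemma IsDenseFree.exists_le_sum_heavyNbhd [DecidableEq α] :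
    ∃ v ∈ V, (2 / 9 - 2 / 10 ^ 5) * (#V : ℝ) ^ 2 ≤
      ((∑ u ∈ V \ G.nbhd V x y, #(G.heavyNbhd V (V \ G.nbhd V x y) v u) : ℕ) : ℝ) := by
  have hn := h.large
  have hlow := h.le_card_nbhd_of_max hx hy hmax
  set A := G.nbhd V x y
  have hA : A.Nonempty := by
    have : (0 : ℝ) < #A := by linarith
    exact card_pos.1 (by exact_mod_cast this)
  obtain ⟨v, hv, hlight⟩ := exists_card_mul_lightCount_le (G := G) (nbhd_subset : A ⊆ V) hA
  refine ⟨v, nbhd_subset hv, ?_⟩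
  have hlight : (G.lightCount V v : ℝ) ≤ 8 * #V := by
    have : (#A : ℝ) * G.lightCount V v ≤ 2 * (#V : ℝ) ^ 2 := by exact_mod_cast hlight
    by_contra! hlt
    nlinarith
  have hdeg : G.degree V v ≤
      4 * #A + (∑ u ∈ V \ A, #(G.heavyNbhd V (V \ A) v u) + G.lightCount V v) :=
    ((h.free.isLight_nbhd hx hy).degree_le_add_linkCount_sdiff hv).trans
      (add_le_add_right (linkCount_le_sum_heavyNbhd_add_lightCount sdiff_subset v) _)
  have hdeg : (G.degree V v : ℝ) ≤
      4 * #A + (((∑ u ∈ V \ A, #(G.heavyNbhd V (V \ A) v u) : ℕ) : ℝ) + G.lightCount V v) := by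
    exact_mod_cast hdeg
  have hAV : (#A : ℝ) ≤ #V := by exact_mod_cast card_le_card nbhd_subset
  have := h.le_degree v (nbhd_subset hv)
  nlinarith

/- The three light sets are the largest codegree neighbourhood `A` and the neighbourhoods of `b`
and `c` in the heavy link graph outside `A`, for a pair `(b, c)` of large degree sum in it. -/
lemma IsDenseFree.exists_light_nbhds_of_max [DecidableEq α] :
    ∃ v ∈ V, ∃ b ∈ V, ∃ c ∈ V, ∃ B C : Finset α, B ⊆ G.nbhd V v b ∧ C ⊆ G.nbhd V v c ∧
      B ⊆ V \ G.nbhd V x y ∧ C ⊆ V \ G.nbhd V x y ∧ Disjoint B C ∧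
      2 * ((2 / 9 - 2 / 10 ^ 5) * (#V : ℝ) ^ 2) ≤ (#V - #(G.nbhd V x y)) * (#B + #C) := by
  obtain ⟨v, hv, hsum⟩ := h.exists_le_sum_heavyNbhd hx hy hmax
  have hn := h.large
  set D := V \ G.nbhd V x y with hD
  have hDV : D ⊆ V := sdiff_subset
  have hpos : 0 < ∑ u ∈ D, #(G.heavyNbhd V D v u) := by
    have : (0 : ℝ) < (∑ u ∈ D, #(G.heavyNbhd V D v u) : ℕ) := by nlinarith
    exact_mod_cast this
  obtain ⟨b, hb, c, hc, hbc⟩ := exists_adj_two_mul_sum_card_le D (G.heavyNbhd V D v)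
    (fun _ _ _ hz => (mem_heavyNbhd.1 hz).1) (fun _ hb _ hc => mem_heavyNbhd_comm hb hc) hpos
  refine ⟨v, hv, b, hDV hb, c, hDV (mem_heavyNbhd.1 hc).1, _, _, heavyNbhd_subset_nbhd hDV,
    heavyNbhd_subset_nbhd hDV, fun _ hz => (mem_heavyNbhd.1 hz).1,
    fun _ hz => (mem_heavyNbhd.1 hz).1, h.free.disjoint_heavyNbhd hDV hv hb hc, ?_⟩
  rw [← cast_card_sdiff nbhd_subset, ← hD]
  have hbc : 2 * ((∑ u ∈ D, #(G.heavyNbhd V D v u) : ℕ) : ℝ) ≤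
      #D * (#(G.heavyNbhd V D v b) + #(G.heavyNbhd V D v c)) := by exact_mod_cast hbc
  linarith

end MaxCodegree

lemma sum_linkCount_rotate (P : Fin 3 → Finset α) (i : Fin 3) (v : α) :
    ∑ j, G.linkCount (P (j + 1)) (P (j + 2)) v = G.linkCount (P (i + 1)) (P (i + 2)) v +
      G.linkCount (P i) (P (i + 2)) v + G.linkCount (P i) (P (i + 1)) v := by
  simp only [sum_fin_three _ i, fin_three_add, linkCount_comm (P (i + 2)) (P i)]

section NearTripartition

variable [DecidableEq α] {P : Fin 3 → Finset α} {i : Fin 3} {ε : ℝ}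

/-- Three light classes of about a third of the vertices each, covering all but a proportion `ε` of
them. The classes are indexed cyclically, the other two classes of `P i` being `P (i + 1)` and
`P (i + 2)`. -/
structure IsNearTripartition (G : TripleSystem α) (V : Finset α) (P : Fin 3 → Finset α) (ε : ℝ) :
    Prop where
  subset : ∀ i, P i ⊆ V
  isLight : ∀ i, G.IsLight V (P i)
  card_le : ∀ i, (#(P i) : ℝ) ≤ (1 / 3 + 1 / 10 ^ 4) * #V
  card_sdiff_le : (#(V \ univ.biUnion P) : ℝ) ≤ ε * #V

lemma linkCount_biUnion_left_le {ι : Type*} (s : Finset ι) (P : ι → Finset α) (C : Finset α)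
    (v : α) : G.linkCount (s.biUnion P) C v ≤ ∑ i ∈ s, G.linkCount (P i) C v := by
  classical
  induction s using Finset.induction with
  | empty => simp [linkCount_eq_sum]
  | insert i s hi ih =>
    rw [biUnion_insert, sum_insert hi]
    exact (linkCount_union_left_le _ _ _ v).trans (add_le_add_right ih _)

lemma degree_le_sum_linkCount (hP : ∀ i, P i ⊆ V) (v : α) :
    G.degree V v ≤ ∑ i, G.linkCount (P i) (P i) v +
      2 * ∑ i, G.linkCount (P (i + 1)) (P (i + 2)) v + 2 * (#(V \ univ.biUnion P) * #V) := by
  set U := univ.biUnion P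
  have hU : U ⊆ V := biUnion_subset.2 fun i _ => hP i
  have hsplit : G.degree V v ≤ G.linkCount U V v + G.linkCount (V \ U) V v :=
    linkCount_le_add_sdiff _ _ _ _
  have hsplit' : G.linkCount U V v ≤ G.linkCount U U v + G.linkCount (V \ U) U v := by
    rw [linkCount_comm U V]
    exact linkCount_le_add_sdiff _ _ _ _
  have houter : G.linkCount (V \ U) V v ≤ #(V \ U) * #V := linkCount_le_card_mul_card _ _ _
  have houter' := linkCount_mono (G := G) (subset_refl (V \ U)) hU v
  have hinner : G.linkCount U U v ≤ ∑ i, ∑ j, G.linkCount (P i) (P j) v := by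
    refine (linkCount_biUnion_left_le _ _ _ v).trans (sum_le_sum fun i _ => ?_)
    rw [linkCount_comm]
    simp only [linkCount_comm (P i)]
    exact linkCount_biUnion_left_le _ _ _ v
  have hrotate : ∑ i, ∑ j, G.linkCount (P i) (P j) v = ∑ i, G.linkCount (P i) (P i) v +
      2 * ∑ i, G.linkCount (P (i + 1)) (P (i + 2)) v := by
    simp only [Fin.sum_univ_three, Fin.reduceAdd, linkCount_comm (P 2) (P 1),
      linkCount_comm (P 2) (P 0), linkCount_comm (P 1) (P 0)]
    ring
  omega

lemma IsDenseFree.exists_light_parts (h : G.IsDenseFree V) :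
    ∃ P : Fin 3 → Finset α, (∀ i, P i ⊆ V) ∧ (∀ i, G.IsLight V (P i)) ∧ (∀ i, #(P i) ≤ #(P 0)) ∧
      (∀ a ∈ V, ∀ b ∈ V, #(G.nbhd V a b) ≤ #(P 0)) ∧
      (#(P 0) + (#(P 1) + #(P 2)) : ℝ) + #(V \ univ.biUnion P) = #V ∧
      (1 / 3 - 1 / 10 ^ 4) * #V ≤ (#(P 0) : ℝ) ∧
      2 * ((2 / 9 - 2 / 10 ^ 5) * (#V : ℝ) ^ 2) ≤ (#V - #(P 0)) * (#(P 1) + #(P 2)) := by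
  obtain ⟨⟨x, y⟩, hxy, hmax⟩ := exists_max_image (V ×ˢ V) (fun p => #(G.nbhd V p.1 p.2))
    (h.nonempty.product h.nonempty)
  obtain ⟨hx, hy⟩ := mem_product.1 hxy
  replace hmax : ∀ a ∈ V, ∀ b ∈ V, #(G.nbhd V a b) ≤ #(G.nbhd V x y) :=
    fun a ha b hb => hmax (a, b) (mem_product.2 ⟨ha, hb⟩)
  obtain ⟨v, hv, b, hb, c, hc, B, C, hB, hC, hBD, hCD, hBC, hlink⟩ :=
    h.exists_light_nbhds_of_max hx hy hmax
  have hBA : #B ≤ #(G.nbhd V x y) := (card_le_card hB).trans (hmax v hv b hb)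
  have hCA : #C ≤ #(G.nbhd V x y) := (card_le_card hC).trans (hmax v hv c hc)
  have hlight {S : Finset α} {a b : α} (ha : a ∈ V) (hb : b ∈ V) (hS : S ⊆ G.nbhd V a b) :
      G.IsLight V S := fun r hr s hs => h.free.isLight_nbhd ha hb r (hS hr) s (hS hs)
  refine ⟨![G.nbhd V x y, B, C], ?_, ?_, ?_, hmax, ?_, h.le_card_nbhd_of_max hx hy hmax, hlink⟩
  · simp [Fin.forall_fin_succ, nbhd_subset, hB.trans nbhd_subset, hC.trans nbhd_subset]
  · simp [Fin.forall_fin_succ, hlight hx hy Subset.rfl, hlight hv hb hB, hlight hv hc hC]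
  · simp [Fin.forall_fin_succ, hBA, hCA]
  · have hU : univ.biUnion ![G.nbhd V x y, B, C] = G.nbhd V x y ∪ (B ∪ C) := by
      ext
      simp [Fin.exists_fin_succ]
    rw [hU, cast_card_sdiff (union_subset nbhd_subset
      (union_subset (hBD.trans sdiff_subset) (hCD.trans sdiff_subset))), card_union_of_disjoint
      (disjoint_of_subset_right (union_subset hBD hCD) disjoint_sdiff), card_union_of_disjoint hBC]
    push_cast
    ring!

lemma card_le_of_parts {a b r n : ℝ} (hn : 0 < n) (hr : 0 ≤ r) (hb : 0 ≤ b)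
    (hsum : a + b + r = n) (hlow : (1 / 3 - 1 / 10 ^ 4) * n ≤ a)
    (hlink : 2 * ((2 / 9 - 2 / 10 ^ 5) * n ^ 2) ≤ (n - a) * b) :
    a ≤ (1 / 3 + 1 / 10 ^ 4) * n ∧ r ≤ 3 / 10 ^ 4 * n := by
  have hup : a ≤ (1 / 3 + 1 / 10 ^ 4) * n := by
    by_contra! hlt
    nlinarith
  have hb' : (2 / 3 - 17 / 10 ^ 5) * n ≤ b := by
    have := mul_le_mul_of_nonneg_right (by linarith : n - a ≤ (2 / 3 + 1 / 10 ^ 4) * n) hb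
    by_contra! hlt
    nlinarith
  exact ⟨hup, by linarith⟩

omit [DecidableEq α] in
lemma IsDenseFree.card_nbhd_le (h : G.IsDenseFree V) (hx : x ∈ V) (hy : y ∈ V) :
    (#(G.nbhd V x y) : ℝ) ≤ (1 / 3 + 1 / 10 ^ 4) * #V := by
  classical
  obtain ⟨P, -, -, -, hmax, hsum, hlow, hlink⟩ := h.exists_light_parts
  have hn := h.large
  have hP := (card_le_of_parts (by linarith) (Nat.cast_nonneg _) (by positivity)
    hsum hlow hlink).1
  exact le_trans (by exact_mod_cast hmax x hx y hy) hP

lemma IsDenseFree.exists_isNearTripartition (h : G.IsDenseFree V) :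
    ∃ P, G.IsNearTripartition V P (3 / 10 ^ 4) := by
  obtain ⟨P, hPV, hlight, hP, -, hsum, hlow, hlink⟩ := h.exists_light_parts
  have hn := h.large
  obtain ⟨hup, hrest⟩ := card_le_of_parts (by linarith) (Nat.cast_nonneg _) (by positivity)
    hsum hlow hlink
  exact ⟨P, hPV, hlight, fun i => le_trans (by exact_mod_cast hP i) hup, hrest⟩

lemma IsNearTripartition.le_linkCount (hP : G.IsNearTripartition V P (3 / 10 ^ 4))
    (h : G.IsDenseFree V) (hv : v ∈ P i)
    (hlight : (G.lightCount V v : ℝ) ≤ 1 / 10 ^ 4 * (#V : ℝ) ^ 2) :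
    (1 / 9 - 5 / 10 ^ 4) * (#V : ℝ) ^ 2 ≤ G.linkCount (P (i + 1)) (P (i + 2)) v := by
  have hn := h.large
  have hdeg := degree_le_sum_linkCount (G := G) hP.subset v
  have hdiag : ∑ j, G.linkCount (P j) (P j) v ≤ 3 * G.lightCount V v := by
    simpa using sum_le_card_nsmul univ _ _ fun j _ =>
      (hP.isLight j).linkCount_le_lightCount (hP.subset j) v
  rw [sum_linkCount_rotate P i] at hdeg
  have hnext := (hP.isLight i).linkCount_le subset_rfl (hP.subset (i + 1)) hv
  have hlast := (hP.isLight i).linkCount_le subset_rfl (hP.subset (i + 2)) hv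
  have hcard := card_le_card (hP.subset i)
  have hdeg : (G.degree V v : ℝ) ≤ 3 * G.lightCount V v + 8 * #V +
      2 * G.linkCount (P (i + 1)) (P (i + 2)) v + 2 * (#(V \ univ.biUnion P) * #V) := by
    norm_cast
    omega
  have := h.le_degree v (hP.subset i hv)
  have := hP.card_sdiff_le
  nlinarith

/-- A near tripartition all of whose vertices have an almost complete link between the other two
classes. -/
structure IsLinkedTripartition (G : TripleSystem α) (V : Finset α) (P : Fin 3 → Finset α) : Prop
    extends G.IsNearTripartition V P (4 / 10 ^ 4) where
  le_linkCount : ∀ i, ∀ v ∈ P i,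
    (1 / 9 - 6 / 10 ^ 4) * (#V : ℝ) ^ 2 ≤ G.linkCount (P (i + 1)) (P (i + 2)) v

lemma IsDenseFree.exists_few_atypical (h : G.IsDenseFree V) :
    ∃ Z : Finset α, (#Z : ℝ) ≤ 1 / 10 ^ 4 * #V ∧
      ∀ v ∈ V \ Z, (G.lightCount V v : ℝ) ≤ 1 / 10 ^ 4 * (#V : ℝ) ^ 2 := by
  classical
  have hn := h.large
  set Z := {v ∈ V | 1 / 10 ^ 4 * (#V : ℝ) ^ 2 < G.lightCount V v}
  have hZ : Z ⊆ V := filter_subset _ _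
  refine ⟨Z, ?_, fun v hv => ?_⟩
  · have hupper : ∑ v ∈ Z, (G.lightCount V v : ℝ) ≤ 2 * (#V : ℝ) ^ 2 := by
      exact_mod_cast (sum_le_sum_of_subset hZ).trans (sum_lightCount_le V)
    have hlower : #Z * (1 / 10 ^ 4 * (#V : ℝ) ^ 2) ≤ ∑ v ∈ Z, (G.lightCount V v : ℝ) := by
      rw [← nsmul_eq_mul]
      exact card_nsmul_le_sum _ _ _ fun v hv => (mem_filter.1 hv).2.le
    have hV : 0 < (#V : ℝ) ^ 2 := by positivity
    have hle : (#Z : ℝ) * (1 / 10 ^ 4) ≤ 2 := by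
      by_contra! hlt
      nlinarith
    linarith
  · obtain ⟨hv, hvZ⟩ := Finset.mem_sdiff.1 hv
    by_contra! hlt
    exact hvZ (mem_filter.2 ⟨hv, hlt⟩)

lemma linkCount_le_linkCount_sdiff_add (B C Z : Finset α) (v : α) :
    G.linkCount B C v ≤ G.linkCount (B \ Z) (C \ Z) v + #Z * #C + #B * #Z := by
  have hleft : G.linkCount B C v ≤ G.linkCount Z C v + G.linkCount (B \ Z) C v :=
    linkCount_le_add_sdiff _ _ _ v
  have hright : G.linkCount C (B \ Z) v ≤
      G.linkCount Z (B \ Z) v + G.linkCount (C \ Z) (B \ Z) v := linkCount_le_add_sdiff _ _ _ v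
  rw [linkCount_comm C, linkCount_comm Z, linkCount_comm (C \ Z)] at hright
  have hZC := linkCount_le_card_mul_card (G := G) Z C v
  have hBZ := (linkCount_mono (G := G) (sdiff_subset : B \ Z ⊆ B) (subset_refl Z) v).trans
    (linkCount_le_card_mul_card B Z v)
  omega

lemma IsDenseFree.exists_isLinkedTripartition (h : G.IsDenseFree V) :
    ∃ P, G.IsLinkedTripartition V P := by
  obtain ⟨P, hP⟩ := h.exists_isNearTripartition
  obtain ⟨Z, hZ, htypical⟩ := h.exists_few_atypical
  have hn := h.large
  refine ⟨fun i => P i \ Z, ⟨fun i => sdiff_subset.trans (hP.subset i),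
    fun i r hr s hs => hP.isLight i r (sdiff_subset hr) s (sdiff_subset hs),
    fun i => le_trans (by exact_mod_cast card_le_card sdiff_subset) (hP.card_le i), ?_⟩, ?_⟩
  · have hsub : V \ univ.biUnion (fun i => P i \ Z) ⊆ V \ univ.biUnion P ∪ Z := by
      intro z
      simp only [Finset.mem_sdiff, mem_biUnion, mem_univ, true_and, mem_union]
      grind
    have hcard : (#(V \ univ.biUnion fun i => P i \ Z) : ℝ) ≤ #(V \ univ.biUnion P) + #Z := by
      exact_mod_cast (card_le_card hsub).trans (card_union_le _ _)
    linarith [hP.card_sdiff_le]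
  · intro i v hv
    have hv' : v ∈ P i := sdiff_subset hv
    have hlink := hP.le_linkCount h hv'
      (htypical v (sdiff_subset_sdiff (hP.subset i) subset_rfl hv))
    have hloss : (G.linkCount (P (i + 1)) (P (i + 2)) v : ℝ) ≤
        G.linkCount (P (i + 1) \ Z) (P (i + 2) \ Z) v + #Z * #(P (i + 2)) + #(P (i + 1)) * #Z := by
      exact_mod_cast linkCount_le_linkCount_sdiff_add _ _ _ v
    have hone := mul_le_mul hZ (hP.card_le (i + 2)) (Nat.cast_nonneg _) (by linarith)
    have htwo := mul_le_mul (hP.card_le (i + 1)) hZ (Nat.cast_nonneg _) (by linarith)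
    have hV : 0 < (#V : ℝ) ^ 2 := by positivity
    nlinarith

lemma IsNearTripartition.not_rel (hP : G.IsNearTripartition V P ε) (h : G.IsDenseFree V) {w : α}
    (hx : x ∈ V) (hy : y ∈ V) (hw : w ∈ V)
    (hlx : (1 / 9 - 45 / 10 ^ 3) * (#V : ℝ) ^ 2 ≤ G.linkCount (P (i + 1)) (P (i + 2)) x)
    (hly : (1 / 9 - 45 / 10 ^ 3) * (#V : ℝ) ^ 2 ≤ G.linkCount (P (i + 1)) (P (i + 2)) y) :
    ¬ G.Rel x y w := by
  have hn := h.large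
  refine h.free.not_rel_of_linkCount (hP.subset (i + 1)) (hP.subset (i + 2)) hx hy hw ?_
  have hmul := mul_le_mul (hP.card_le (i + 1)) (hP.card_le (i + 2)) (Nat.cast_nonneg _)
    (by linarith)
  have := hP.card_le (i + 1)
  have := hP.card_le (i + 2)
  have : (#(P (i + 1)) * #(P (i + 2)) + #(P (i + 1)) + #(P (i + 2)) : ℝ) <
      G.linkCount (P (i + 1)) (P (i + 2)) x + G.linkCount (P (i + 1)) (P (i + 2)) y := by nlinarith
  exact_mod_cast this

lemma IsLinkedTripartition.le_sum_card_nbhd (hP : G.IsLinkedTripartition V P) (i : Fin 3) :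
    #(P (i + 1)) * ((1 / 9 - 6 / 10 ^ 4) * (#V : ℝ) ^ 2) ≤
      ∑ p ∈ P (i + 1) ×ˢ P (i + 2), (#(G.nbhd (P i) p.1 p.2) : ℝ) := by
  rw [← nsmul_eq_mul, sum_product]
  refine card_nsmul_le_sum _ _ _ fun a ha => ?_
  have := hP.le_linkCount (i + 1) a ha
  rw [(fin_three_add i).1, (fin_three_add i).2.1, linkCount_eq_sum] at this
  exact_mod_cast this

/- Only a small share of the triples of `P (i + 1) × P (i + 2) × P i` are missing, so the many
pairs in the link of `u` cannot all have few neighbours in `P i`. -/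
lemma IsLinkedTripartition.exists_rel_le_card_nbhd (hP : G.IsLinkedTripartition V P)
    (hV : 0 < #V) {u : α}
    (hu : 3 / 10 ^ 2 * (#V : ℝ) ^ 2 ≤ G.linkCount (P (i + 1)) (P (i + 2)) u) :
    ∃ a ∈ P (i + 1), ∃ c ∈ P (i + 2), G.Rel u a c ∧
      (1 / 3 - 2 / 10 ^ 2) * #V ≤ (#(G.nbhd (P i) a c) : ℝ) := by
  classical
  by_contra! hcon
  set A := P (i + 1)
  set C := P (i + 2)
  set m : ℝ := (1 / 3 + 1 / 10 ^ 4) * #V with hm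
  have hcardA : (#A : ℝ) ≤ m := hP.card_le (i + 1)
  have hcardC : (#C : ℝ) ≤ m := hP.card_le (i + 2)
  have hlower := hP.le_sum_card_nbhd i
  have hpair (p : α × α) (hp : p ∈ A ×ˢ C) :
      (#(G.nbhd (P i) p.1 p.2) : ℝ) + (if G.Rel u p.1 p.2 then 2 / 10 ^ 2 * (#V : ℝ) else 0) ≤
        m := by
    have hle : (#(G.nbhd (P i) p.1 p.2) : ℝ) ≤ #(P i) := by exact_mod_cast card_le_card nbhd_subset
    have := hP.card_le i
    split_ifs with hrel
    · have := hcon p.1 (mem_product.1 hp).1 p.2 (mem_product.1 hp).2 hrel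
      linarith
    · linarith
  have hupper := sum_le_card_nsmul _ _ _ hpair
  rw [sum_add_distrib, ← sum_filter, sum_const, card_product, nsmul_eq_mul, nsmul_eq_mul] at hupper
  change _ + (G.linkCount A C u : ℝ) * _ ≤ _ at hupper
  push_cast at hupper
  have hVpos : (0 : ℝ) < #V := by exact_mod_cast hV
  have hAC : (#A * #C : ℝ) * m ≤ #A * (m * m) := by
    rw [mul_assoc]
    gcongr
  have hmiss : #A * (7 / 10 ^ 4 * (#V : ℝ) ^ 2) ≤ m * (7 / 10 ^ 4 * (#V : ℝ) ^ 2) := by gcongr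
  rw [hm] at hAC hmiss hupper
  have hcube : 0 < (#V : ℝ) ^ 3 := by positivity
  have hAV : 0 ≤ #A * (#V : ℝ) ^ 2 := by positivity
  nlinarith [mul_le_mul_of_nonneg_right hu (by positivity : 0 ≤ 2 / 10 ^ 2 * (#V : ℝ))]

lemma IsLinkedTripartition.linkCount_le (hP : G.IsLinkedTripartition V P) (h : G.IsDenseFree V)
    {u : α} (hu : u ∈ V) (hui : u ∉ P i)
    (hlink : 3 / 10 ^ 2 * (#V : ℝ) ^ 2 ≤ G.linkCount (P (i + 1)) (P (i + 2)) u) :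
    (G.linkCount (P i) V u : ℝ) ≤ 21 / 10 ^ 3 * (#V : ℝ) ^ 2 := by
  have hn := h.large
  obtain ⟨a, ha, c, hc, hrel, hnbhd⟩ := hP.exists_rel_le_card_nbhd (card_pos.2 h.nonempty) hlink
  replace ha := hP.subset _ ha
  replace hc := hP.subset _ hc
  set N := G.nbhd (P i) a c
  have hNV : N ⊆ G.nbhd V a c := nbhd_mono (hP.subset i) a c
  have hinner : G.linkCount N V u ≤ #V * 2 := by
    rw [linkCount_eq_sum]
    refine (sum_le_card_nsmul N _ 2 fun b hb => ?_).trans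
      (Nat.mul_le_mul_right _ (card_le_card (hNV.trans nbhd_subset)))
    refine h.free.card_nbhd_le_two ha hc (mem_nbhd.2 ⟨hu, G.rotate hrel⟩) (hNV hb) ?_
    rintro rfl
    exact hui (nbhd_subset hb)
  have houter : (G.linkCount (P i \ N) V u : ℝ) ≤ (#(P i) - #N) * #V := by
    rw [← cast_card_sdiff nbhd_subset]
    exact_mod_cast linkCount_le_card_mul_card _ _ _
  have hsplit : (G.linkCount (P i) V u : ℝ) ≤ G.linkCount N V u + G.linkCount (P i \ N) V u := by
    exact_mod_cast linkCount_le_add_sdiff _ _ _ _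
  have hinner' : (G.linkCount N V u : ℝ) ≤ #V * 2 := by exact_mod_cast hinner
  nlinarith [hP.card_le i]

lemma IsLinkedTripartition.exists_le_linkCount (hP : G.IsLinkedTripartition V P)
    (h : G.IsDenseFree V) (hv : v ∈ V) :
    ∃ i, (1 / 9 - 45 / 10 ^ 3) * (#V : ℝ) ^ 2 ≤ G.linkCount (P (i + 1)) (P (i + 2)) v := by
  have hmem {j : Fin 3} {r : α} (hr : r ∈ P j) :
      (1 / 9 - 45 / 10 ^ 3) * (#V : ℝ) ^ 2 ≤ G.linkCount (P (j + 1)) (P (j + 2)) r :=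
    le_trans (by gcongr ?_ * _; norm_num) (hP.le_linkCount j r hr)
  by_cases! hvP : ∃ i, v ∈ P i
  · exact hvP.imp fun _ => hmem
  have hn := h.large
  have hdiag : ∑ j, G.linkCount (P j) (P j) v = 0 := by
    classical
    refine sum_eq_zero fun j _ => card_eq_zero.2 (filter_eq_empty_iff.2 ?_)
    rintro ⟨r, s⟩ hrs hrel
    obtain ⟨hr, hs⟩ := mem_product.1 hrs
    exact hP.not_rel h (hP.subset j hr) (hP.subset j hs) hv (hmem hr) (hmem hs) (G.rotate hrel)
  have hdeg := degree_le_sum_linkCount (G := G) hP.subset v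
  rw [hdiag, zero_add] at hdeg
  have hdeg : (G.degree V v : ℝ) ≤ 2 * ∑ j, (G.linkCount (P (j + 1)) (P (j + 2)) v : ℝ) +
      2 * (#(V \ univ.biUnion P) * #V) := by exact_mod_cast hdeg
  have hsum : (1 / 9 - 5 / 10 ^ 4) * (#V : ℝ) ^ 2 ≤
      ∑ j, (G.linkCount (P (j + 1)) (P (j + 2)) v : ℝ) := by
    nlinarith [h.le_degree v hv, hP.card_sdiff_le]
  obtain ⟨i, -, hi⟩ := exists_le_of_sum_le (s := univ) (f := fun _ => 3 / 10 ^ 2 * (#V : ℝ) ^ 2)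
    univ_nonempty (le_trans (by simp; nlinarith) hsum)
  refine ⟨i, ?_⟩
  have hV := hP.linkCount_le h hv (hvP i) hi
  have hnext := (linkCount_mono (G := G) (subset_refl (P i)) (hP.subset (i + 1)) v)
  have hlast := (linkCount_mono (G := G) (subset_refl (P i)) (hP.subset (i + 2)) v)
  have hrotate := sum_linkCount_rotate (G := G) P i v
  rify at hnext hlast hrotate
  nlinarith

end NearTripartition

theorem IsDenseFree.exists_coloring (h : G.IsDenseFree V) :
    ∃ f : α → Fin 3, ∀ x ∈ V, ∀ y ∈ V, ∀ z ∈ V, G.Rel x y z → f x ≠ f y := by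
  classical
  obtain ⟨P, hP⟩ := h.exists_isLinkedTripartition
  choose! f hf using fun v (hv : v ∈ V) => hP.exists_le_linkCount h hv
  refine ⟨f, fun x hx y hy z hz hrel hxy => ?_⟩
  exact hP.not_rel h hx hy hz (hf x hx) (hxy ▸ hf y hy) hrel

section Turan

/-- The multipartite 3-graph whose edges are the triples of vertices with pairwise distinct
colours. -/
def multipartite {ι : Type*} (f : α → ι) : TripleSystem α where
  Rel x y z := f x ≠ f y ∧ f x ≠ f z ∧ f y ≠ f z
  swap h := ⟨h.1.symm, h.2.2, h.2.1⟩
  rotate h := ⟨h.2.2, h.1.symm, h.2.1.symm⟩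
  ne h := fun hxy => h.1 (congrArg f hxy)

lemma mem_triples : (x, y, z) ∈ G.triples V ↔ x ∈ V ∧ y ∈ V ∧ z ∈ V ∧ G.Rel x y z := by
  simp [triples, and_assoc]

lemma triples_subset_triples {G' : TripleSystem α}
    (h : ∀ x ∈ V, ∀ y ∈ V, ∀ z ∈ V, G.Rel x y z → G'.Rel x y z) : G.triples V ⊆ G'.triples V :=
  fun ⟨x, y, z⟩ hp => by
    obtain ⟨hx, hy, hz, hrel⟩ := mem_triples.1 hp
    exact mem_triples.2 ⟨hx, hy, hz, h x hx y hy z hz hrel⟩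

lemma rel_iff_of_tripleCount_le {G' : TripleSystem α}
    (h : ∀ x ∈ V, ∀ y ∈ V, ∀ z ∈ V, G.Rel x y z → G'.Rel x y z)
    (hle : G'.tripleCount V ≤ G.tripleCount V) :
    ∀ x ∈ V, ∀ y ∈ V, ∀ z ∈ V, (G.Rel x y z ↔ G'.Rel x y z) := by
  have heq := eq_of_subset_of_card_le (triples_subset_triples h) hle
  intro x hx y hy z hz
  have hmem := Finset.ext_iff.1 heq (x, y, z)
  simpa only [mem_triples, hx, hy, hz, true_and] using hmem

lemma tripleCount_multipartite (f : α → Fin 3) (V : Finset α) :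
    (multipartite f).tripleCount V = 6 * ∏ i, #{x ∈ V | f x = i} := by
  classical
  have hfiber : ∀ c : Fin 3 × Fin 3 × Fin 3,
      #{p ∈ (multipartite f).triples V | (f p.1, f p.2.1, f p.2.2) = c} =
        if c.1 ≠ c.2.1 ∧ c.1 ≠ c.2.2 ∧ c.2.1 ≠ c.2.2 then
          #{x ∈ V | f x = c.1} * (#{x ∈ V | f x = c.2.1} * #{x ∈ V | f x = c.2.2}) else 0 := by
    rintro ⟨i, j, k⟩
    split_ifs with hc
    · rw [← card_product, ← card_product]
      congr 1
      ext ⟨x, y, z⟩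
      simp only [mem_filter, mem_triples, multipartite, mem_product, Prod.mk.injEq]
      grind
    · refine card_eq_zero.2 (filter_eq_empty_iff.2 ?_)
      rintro ⟨x, y, z⟩ hp heq
      obtain ⟨rfl, rfl, rfl⟩ : f x = i ∧ f y = j ∧ f z = k := by simpa using heq
      exact hc (mem_triples.1 hp).2.2.2
  rw [tripleCount, card_eq_sum_card_fiberwise (t := univ)
    (f := fun p : α × α × α => (f p.1, f p.2.1, f p.2.2)) fun _ _ => mem_univ _]
  simp only [hfiber, Fintype.sum_prod_type, Fin.sum_univ_three, Fin.prod_univ_three]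
  simp only [ne_eq, not_true_eq_false, and_self, ↓reduceIte, zero_ne_one, not_false_eq_true,
    and_true, add_zero, Fin.reduceEq, one_ne_zero, and_false, zero_add]
  ring

lemma tripleCount_insert [DecidableEq α] (hv : v ∉ V) :
    G.tripleCount (insert v V) = G.tripleCount V + 3 * G.degree V v := by
  classical
  have hrot : ∀ x y, G.Rel x y v ↔ G.Rel v x y :=
    fun x y => ⟨fun h => G.rotate (G.rotate h), G.rotate⟩
  have hswap : ∀ x y, G.Rel x v y ↔ G.Rel v x y := fun x y => ⟨G.swap, G.swap⟩
  have hirr : ∀ x, ¬G.Rel v v x := fun x h => G.ne h rfl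
  simp only [tripleCount, triples, degree, linkCount, card_filter, sum_product, sum_insert hv, hrot,
    hswap, hirr, if_false, sum_add_distrib, sum_const_zero]
  ring

lemma degree_insert_self [DecidableEq α] (hv : v ∉ V) :
    G.degree (insert v V) v = G.degree V v := by
  have hirr : ∀ x, ¬G.Rel v v x := fun x h => G.ne h rfl
  have hirr' : ∀ x, ¬G.Rel v x v := fun x h => h.ne_last rfl
  simp only [degree, linkCount, card_filter, sum_product, sum_insert hv, hirr, hirr', if_false,
    zero_add, sum_const_zero]

lemma tripleCount_erase_add [DecidableEq α] (hv : v ∈ V) :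
    G.tripleCount (V.erase v) + 3 * G.degree V v = G.tripleCount V := by
  conv_rhs => rw [← insert_erase hv, tripleCount_insert (notMem_erase v V)]
  rw [← degree_insert_self (notMem_erase v V), insert_erase hv]

lemma tripleCount_le_pow (V : Finset α) : G.tripleCount V ≤ #V ^ 3 := by
  classical
  refine (card_filter_le _ _).trans_eq ?_
  rw [card_product, card_product]
  ring

lemma tripleCount_multipartite_le (f : α → Fin 3) (V : Finset α) :
    (multipartite f).tripleCount V ≤ 6 * balancedProd #V := by
  rw [tripleCount_multipartite, card_eq_sum_card_color f V]
  exact Nat.mul_le_mul_left 6 (prod_le_balancedProd _)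

lemma rel_multipartite_of_ne {ι : Type*} {f : α → ι}
    (hf : ∀ x ∈ V, ∀ y ∈ V, ∀ z ∈ V, G.Rel x y z → f x ≠ f y) :
    ∀ x ∈ V, ∀ y ∈ V, ∀ z ∈ V, G.Rel x y z → (multipartite f).Rel x y z :=
  fun x hx y hy z hz h =>
    ⟨hf x hx y hy z hz h, hf x hx z hz y hy h.swap_right, hf y hy z hz x hx (G.rotate h)⟩

/- Deleting a vertex from a balanced tripartition costs `2⌊m/3⌋⌊(m+1)/3⌋` ordered triples through
it, so a vertex below this degree improves the balance between the two sides. -/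
lemma TriangleFree.exists_coloring_or_exists_erase [DecidableEq α] (h : G.TriangleFree V)
    (hV : 10 ^ 9 ≤ #V) :
    (∃ f : α → Fin 3, ∀ x ∈ V, ∀ y ∈ V, ∀ z ∈ V, G.Rel x y z → f x ≠ f y) ∨
      ∃ v ∈ V, G.tripleCount V + 1 + 6 * balancedProd (#V - 1) ≤
        G.tripleCount (V.erase v) + 6 * balancedProd #V := by
  obtain ⟨m, hm⟩ : ∃ m, #V = m + 1 := ⟨#V - 1, by omega⟩
  by_cases hdeg : ∀ v ∈ V, 2 * ((m + 1) / 3 * ((m + 2) / 3)) ≤ G.degree V v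
  · refine .inl (IsDenseFree.exists_coloring ⟨h, by exact_mod_cast hV, fun v hv => ?_⟩)
    have hlow₁ : ((m : ℝ) + 1) - 2 ≤ 3 * ((m + 1) / 3 : ℕ) := by
      have : m + 1 ≤ 3 * ((m + 1) / 3) + 2 := by omega
      have : ((m + 1 : ℕ) : ℝ) ≤ (3 * ((m + 1) / 3) + 2 : ℕ) := by exact_mod_cast this
      push_cast at this ⊢
      linarith
    have hlow₂ : ((m : ℝ) + 1) - 2 ≤ 3 * ((m + 2) / 3 : ℕ) := by
      have : m + 1 ≤ 3 * ((m + 2) / 3) + 2 := by omega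
      have : ((m + 1 : ℕ) : ℝ) ≤ (3 * ((m + 2) / 3) + 2 : ℕ) := by exact_mod_cast this
      push_cast at this ⊢
      linarith
    have hlarge : (10 : ℝ) ^ 9 ≤ m + 1 := by exact_mod_cast hm ▸ hV
    have hprod := mul_le_mul hlow₁ hlow₂ (by linarith) (by positivity)
    have hdeg' : (2 * (((m + 1) / 3 : ℕ) * ((m + 2) / 3 : ℕ)) : ℝ) ≤ G.degree V v := by
      exact_mod_cast hdeg v hv
    rw [hm]
    push_cast at hprod hdeg' ⊢
    nlinarith
  · push Not at hdeg
    obtain ⟨v, hv, hlt⟩ := hdeg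
    refine .inr ⟨v, hv, ?_⟩
    have herase := tripleCount_erase_add (G := G) hv
    have hsucc := balancedProd_succ m
    rw [hm, Nat.add_sub_cancel]
    omega

/- Induction from the trivial bound on `10 ^ 9` vertices: each step either ends in a tripartite
3-graph or removes one unit of the excess. -/
lemma TriangleFree.tripleCount_le_add (d : ℕ) (h : G.TriangleFree V) (hV : #V = 10 ^ 9 + d) :
    G.tripleCount V ≤ 6 * balancedProd #V + (10 ^ 27 - d) := by
  classical
  induction d generalizing V with
  | zero =>
    have hle := tripleCount_le_pow (G := G) V
    rw [hV] at hle
    omega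
  | succ d ih =>
    obtain ⟨f, hf⟩ | ⟨v, hv, hgain⟩ := h.exists_coloring_or_exists_erase (by omega)
    · exact (card_le_card (triples_subset_triples (rel_multipartite_of_ne hf))).trans
        ((tripleCount_multipartite_le f V).trans (Nat.le_add_right _ _))
    · have hcard := card_erase_of_mem hv
      have hle := ih (h.mono (erase_subset v V)) (by omega)
      rw [hcard] at hle
      omega

theorem TriangleFree.tripleCount_le (h : G.TriangleFree V) (hV : 10 ^ 28 ≤ #V) :
    G.tripleCount V ≤ 6 * balancedProd #V := by
  have hle := h.tripleCount_le_add (#V - 10 ^ 9) (by omega)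
  omega

lemma TriangleFree.tripleCount_le_cube (h : G.TriangleFree V) (hV : 10 ^ 28 ≤ #V) :
    (G.tripleCount V : ℝ) ≤ 2 / 9 * #V ^ 3 := by
  have hturan : (G.tripleCount V : ℝ) ≤ (6 * balancedProd #V : ℕ) := by
    exact_mod_cast h.tripleCount_le hV
  have hbal : ((27 * balancedProd #V : ℕ) : ℝ) ≤ (#V ^ 3 : ℕ) := by
    exact_mod_cast twentySeven_mul_balancedProd_le #V
  push_cast at hturan hbal
  linarith

theorem TriangleFree.exists_multipartite_of_le (h : G.TriangleFree V) (hV : 10 ^ 28 < #V)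
    (hle : 6 * balancedProd #V ≤ G.tripleCount V) :
    ∃ f : α → Fin 3, (∀ i, #{x ∈ V | f x = i} = (#V + i) / 3) ∧
      ∀ x ∈ V, ∀ y ∈ V, ∀ z ∈ V, (G.Rel x y z ↔ (multipartite f).Rel x y z) := by
  classical
  obtain ⟨f, hf⟩ | ⟨v, hv, hgain⟩ := h.exists_coloring_or_exists_erase (by omega)
  · have hcount := tripleCount_multipartite_le f V
    have hrel := rel_iff_of_tripleCount_le (rel_multipartite_of_ne hf) (by omega)
    have hcount' : G.tripleCount V ≤ (multipartite f).tripleCount V :=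
      card_le_card (triples_subset_triples (rel_multipartite_of_ne hf))
    have hprod : ∏ i, #{x ∈ V | f x = i} = balancedProd (∑ i, #{x ∈ V | f x = i}) := by
      rw [← card_eq_sum_card_color f V]
      rw [tripleCount_multipartite] at hcount hcount'
      omega
    obtain ⟨σ, hσ⟩ := exists_perm_of_prod_eq_balancedProd
      (by rw [← card_eq_sum_card_color f V]; omega) hprod
    refine ⟨fun x => σ.symm (f x), fun i => ?_, fun x hx y hy z hz => ?_⟩
    · simpa only [Equiv.symm_apply_eq, ← card_eq_sum_card_color f V] using hσ i
    · simpa only [multipartite, ne_eq, EmbeddingLike.apply_eq_iff_eq] using hrel x hx y hy z hz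
  · have hcard := card_erase_of_mem hv
    have hle' := (h.mono (erase_subset v V)).tripleCount_le (by omega)
    rw [hcard] at hle'
    omega

end Turan

lemma degree_mono (hW : W ⊆ V) (v : α) : G.degree W v ≤ G.degree V v := linkCount_mono hW hW v

lemma degree_le_card_sq (V : Finset α) (v : α) : G.degree V v ≤ #V ^ 2 := by
  rw [sq]
  exact linkCount_le_card_mul_card V V v

lemma degree_le_add_card_sdiff [DecidableEq α] (hW : W ⊆ V) (v : α) :
    G.degree V v ≤ G.degree W v + 2 * (#(V \ W) * #V) := by
  have hfst := linkCount_le_add_sdiff (G := G) V W V v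
  have hsnd := linkCount_le_add_sdiff (G := G) V W W v
  have hrest := linkCount_le_card_mul_card (G := G) (V \ W) V v
  have hrest' := linkCount_le_card_mul_card (G := G) (V \ W) W v
  have hcard := Nat.mul_le_mul_left #(V \ W) (card_le_card hW)
  rw [linkCount_comm W V] at hfst
  rw [degree, degree]
  omega

lemma tripleCount_le_tripleCount_sdiff_add [DecidableEq α] {d : ℝ} (hX : W ⊆ V)
    (hd : ∀ w ∈ W, (G.degree V w : ℝ) ≤ d) :
    (G.tripleCount V : ℝ) ≤ G.tripleCount (V \ W) + 3 * #W * d := by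
  induction W using Finset.induction_on with
  | empty => simp
  | insert w W hw ih =>
    have ih := ih ((subset_insert _ _).trans hX) fun x hx => hd x (mem_insert_of_mem hx)
    have hwV : w ∈ V \ W := mem_sdiff.2 ⟨hX (mem_insert_self _ _), hw⟩
    have herase : (G.tripleCount ((V \ W).erase w) + 3 * G.degree (V \ W) w : ℝ) =
        G.tripleCount (V \ W) := by exact_mod_cast tripleCount_erase_add hwV
    have hmono : (G.degree (V \ W) w : ℝ) ≤ G.degree V w := by
      exact_mod_cast degree_mono sdiff_subset w
    have hdw := hd w (mem_insert_self _ _)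
    rw [← sdiff_insert] at herase
    rw [card_insert_of_notMem hw]
    push_cast
    linarith

section DegreeBound

/- A subset maximizing `tripleCount S - c * #S ^ 3` loses by the deletion of any vertex. -/
lemma exists_subset_forall_le_degree (c : ℝ) (hv : v ∈ V) :
    ∃ S ⊆ V, v ∈ S ∧
      G.tripleCount V - c * #V ^ 3 ≤ (G.tripleCount S - c * #S ^ 3 : ℝ) ∧
      ∀ w ∈ S, w ≠ v → c * (#S ^ 3 - (#S - 1) ^ 3) ≤ 3 * (G.degree S w : ℝ) := by
  classical
  obtain ⟨S, hS, hmax⟩ := exists_max_image {S ∈ V.powerset | v ∈ S}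
    (fun S => (G.tripleCount S : ℝ) - c * #S ^ 3) ⟨V, by simp [hv]⟩
  simp only [mem_filter, mem_powerset, and_imp] at hS hmax
  refine ⟨S, hS.1, hS.2, hmax V Subset.rfl hv, fun w hw hwv => ?_⟩
  have hdel := hmax (S.erase w) ((erase_subset w S).trans hS.1) (mem_erase.2 ⟨hwv.symm, hS.2⟩)
  have hcard : (#(S.erase w) : ℝ) = #S - 1 := by
    rw [card_erase_of_mem hw, Nat.cast_pred (card_pos.2 ⟨w, hw⟩)]
  have herase : (G.tripleCount (S.erase w) + 3 * G.degree S w : ℝ) = G.tripleCount S := by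
    exact_mod_cast tripleCount_erase_add hw
  rw [hcard] at hdel
  linarith

lemma TriangleFree.exists_subset_le_degree (h : G.TriangleFree V) (hV : 10 ^ 38 ≤ #V)
    (hdense : (2 / 9 - 1 / 10 ^ 8) * (#V : ℝ) ^ 3 ≤ G.tripleCount V) (hv : v ∈ V) :
    ∃ S ⊆ V, v ∈ S ∧ 0.999 * (#V : ℝ) ≤ #S ∧
      ∀ w ∈ S, w ≠ v → (2 / 9 - 1 / 10 ^ 5) * (#S : ℝ) ^ 2 ≤ G.degree S w := by
  obtain ⟨S, hSV, hvS, hval, hdeg⟩ :=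
    exists_subset_forall_le_degree (G := G) (2 / 9 - 4 / 10 ^ 6) hv
  have hn : (10 : ℝ) ^ 38 ≤ #V := by exact_mod_cast hV
  have hn3 : (0 : ℝ) < (#V : ℝ) ^ 3 := by positivity
  have hS28 : 10 ^ 28 ≤ #S := by
    by_contra! hlt
    have hlt' : (#S : ℝ) ≤ #V / 10 ^ 10 := by
      have : (#S : ℝ) ≤ 10 ^ 28 := by exact_mod_cast hlt.le
      linarith
    have htriv : (G.tripleCount S : ℝ) ≤ #S ^ 3 := by exact_mod_cast tripleCount_le_pow S
    have hcube : (#S : ℝ) ^ 3 ≤ (#V / 10 ^ 10) ^ 3 := by gcongr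
    rw [div_pow] at hcube
    norm_num at hcube
    linarith
  have hturan := (h.mono hSV).tripleCount_le_cube hS28
  have hlarge : 0.999 * (#V : ℝ) ≤ #S := by
    by_contra! hlt
    have hcube : (#S : ℝ) ^ 3 ≤ (0.999 * #V) ^ 3 := by gcongr
    rw [mul_pow] at hcube
    norm_num at hcube
    linarith
  refine ⟨S, hSV, hvS, hlarge, fun w hw hwv => ?_⟩
  have hm : (10 : ℝ) ^ 28 ≤ #S := by exact_mod_cast hS28
  nlinarith [hdeg w hw hwv, hm]

theorem TriangleFree.degree_le (h : G.TriangleFree V) (hV : 10 ^ 38 ≤ #V)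
    (hdense : (2 / 9 - 1 / 10 ^ 8) * (#V : ℝ) ^ 3 ≤ G.tripleCount V) (hv : v ∈ V) :
    (G.degree V v : ℝ) ≤ 0.35 * (#V : ℝ) ^ 2 := by
  classical
  obtain ⟨S, hSV, hvS, hlarge, hdeg⟩ := h.exists_subset_le_degree hV hdense hv
  by_contra! hlt
  have hn : (10 : ℝ) ^ 38 ≤ #V := by exact_mod_cast hV
  have hcard : (#(V \ S) : ℝ) ≤ 0.001 * #V := by
    rw [cast_card_sdiff hSV]
    linarith
  have hdegS : (G.degree V v : ℝ) ≤ G.degree S v + 2 * (#(V \ S) * #V) := by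
    exact_mod_cast degree_le_add_card_sdiff hSV v
  have hlow : 0.348 * (#V : ℝ) ^ 2 ≤ G.degree S v := by nlinarith
  have hSV' : (#S : ℝ) ≤ #V := by exact_mod_cast card_le_card hSV
  have hSV2 : (#S : ℝ) ^ 2 ≤ (#V : ℝ) ^ 2 := by gcongr
  have hfree : G.IsDenseFree S := by
    refine ⟨h.mono hSV, by linarith, fun w hw => ?_⟩
    obtain rfl | hwv := eq_or_ne w v
    · linarith
    · exact hdeg w hw hwv
  have hup : (G.degree S v : ℝ) ≤ #S * ((1 / 3 + 1 / 10 ^ 4) * #S) := by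
    rw [degree, linkCount_eq_sum, ← nsmul_eq_mul, Nat.cast_sum]
    exact sum_le_card_nsmul _ _ _ fun b hb => hfree.card_nbhd_le hvS hb
  nlinarith

end DegreeBound

/- A vertex of degree above `0.35 * #V ^ 2` cannot lie in a large dense triangle-free subset, so no
small set `Y` avoiding it meets all generalized triangles. -/
theorem not_triangleFree_sdiff [DecidableEq α] {Y : Finset α} {b : α} (hV : 10 ^ 39 ≤ #V)
    (hdense : (2 / 9 - 1 / 10 ^ 9) * (#V : ℝ) ^ 3 ≤ G.tripleCount V) (hY : Y ⊆ V)
    (hYV : (#Y : ℝ) ≤ 1 / 10 ^ 9 * #V) (hb : b ∈ V \ Y)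
    (hdeg : 0.36 * (#V : ℝ) ^ 2 ≤ G.degree V b) : ¬G.TriangleFree (V \ Y) := by
  intro hfree
  have hn : (10 : ℝ) ^ 39 ≤ #V := by exact_mod_cast hV
  have hcard : (#(V \ Y) : ℝ) = #V - #Y := cast_card_sdiff hY
  have hle : (#(V \ Y) : ℝ) ≤ #V := by exact_mod_cast card_le_card sdiff_subset
  have hlarge : 10 ^ 38 ≤ #(V \ Y) := by
    have : (10 : ℝ) ^ 38 ≤ #(V \ Y) := by linarith
    exact_mod_cast this
  have hcount : (G.tripleCount V : ℝ) ≤ G.tripleCount (V \ Y) + 3 * #Y * (#V : ℝ) ^ 2 :=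
    tripleCount_le_tripleCount_sdiff_add hY fun x _ => by exact_mod_cast degree_le_card_sq V x
  have hdense' : (2 / 9 - 1 / 10 ^ 8) * (#(V \ Y) : ℝ) ^ 3 ≤ G.tripleCount (V \ Y) := by
    have hcube : (#(V \ Y) : ℝ) ^ 3 ≤ (#V : ℝ) ^ 3 := by gcongr
    have hY2 : (#Y : ℝ) * (#V : ℝ) ^ 2 ≤ 1 / 10 ^ 9 * #V * (#V : ℝ) ^ 2 := by gcongr
    nlinarith
  have hup := hfree.degree_le hlarge hdense' hb
  have hdrop : (G.degree V b : ℝ) ≤ G.degree (V \ Y) b + 2 * (#Y * #V) := by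
    have := degree_le_add_card_sdiff (G := G) (sdiff_subset (s := V) (t := Y)) b
    rw [Finset.sdiff_sdiff_eq_self hY] at this
    exact_mod_cast this
  have hsq : (#(V \ Y) : ℝ) ^ 2 ≤ (#V : ℝ) ^ 2 := by gcongr
  nlinarith

section Complement

/-- The 3-graph formed by the triples of distinct vertices that are not edges of `G`. -/
def compl (G : TripleSystem α) : TripleSystem α where
  Rel x y z := x ≠ y ∧ x ≠ z ∧ y ≠ z ∧ ¬G.Rel x y z
  swap h := ⟨h.1.symm, h.2.2.1, h.2.1, fun hG => h.2.2.2 (G.swap hG)⟩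
  rotate h := ⟨h.2.2.1, h.1.symm, h.2.1.symm, fun hG => h.2.2.2 (G.rotate (G.rotate hG))⟩
  ne h := h.1

lemma degree_add_degree_compl (hv : v ∉ V) :
    G.degree V v + G.compl.degree V v = (#V).descFactorial 2 := by
  classical
  have hoff : {p ∈ V ×ˢ V | G.Rel v p.1 p.2 ∨ G.compl.Rel v p.1 p.2} = V.offDiag := by
    ext ⟨x, y⟩
    rw [mem_filter, mem_product, mem_offDiag]
    simp only [compl]
    grind [Rel.ne_right]
  rw [degree, degree, linkCount, linkCount, ← card_union_of_disjoint
    (disjoint_filter.2 fun p _ hG hcompl => hcompl.2.2.2 hG), ← filter_or, hoff, offDiag_card,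
    ← Nat.mul_sub_one, Nat.descFactorial_succ, Nat.descFactorial_one, mul_comm]

lemma tripleCount_add_tripleCount_compl (V : Finset α) :
    G.tripleCount V + G.compl.tripleCount V = (#V).descFactorial 3 := by
  classical
  induction V using Finset.induction_on with
  | empty => simp [tripleCount, triples]
  | insert v V hv ih =>
    have hpascal : (#V + 1).descFactorial 3 = (#V).descFactorial 3 + 3 * (#V).descFactorial 2 := by
      rw [Nat.succ_descFactorial_succ, Nat.descFactorial_succ _ 2, ← add_mul]
      rcases le_or_gt 2 #V with h | h
      · congr 1
        lia
      · rw [Nat.descFactorial_of_lt h, mul_zero, mul_zero]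
    rw [card_insert_of_notMem hv, hpascal, ← ih, ← degree_add_degree_compl (G := G) hv,
      tripleCount_insert hv, tripleCount_insert hv]
    ring

lemma triples_mono (hW : W ⊆ V) : G.triples W ⊆ G.triples V := fun ⟨x, y, z⟩ hp => by
  obtain ⟨hx, hy, hz, hrel⟩ := mem_triples.1 hp
  exact mem_triples.2 ⟨hW hx, hW hy, hW hz, hrel⟩

lemma tripleCount_add_descFactorial_le (hW : W ⊆ V) :
    G.tripleCount V + (#W).descFactorial 3 ≤ (#V).descFactorial 3 + G.tripleCount W := by
  have hmono : G.compl.tripleCount W ≤ G.compl.tripleCount V := card_le_card (triples_mono hW)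
  rw [← tripleCount_add_tripleCount_compl (G := G), ← tripleCount_add_tripleCount_compl (G := G)]
  lia

lemma tripleCount_add_descFactorial_eq_iff (hW : W ⊆ V) :
    G.tripleCount V + (#W).descFactorial 3 = (#V).descFactorial 3 + G.tripleCount W ↔
      ∀ x ∈ V, ∀ y ∈ V, ∀ z ∈ V, x ≠ y → x ≠ z → y ≠ z →
        ¬(x ∈ W ∧ y ∈ W ∧ z ∈ W) → G.Rel x y z := by
  have hcount : G.tripleCount V + (#W).descFactorial 3 = (#V).descFactorial 3 + G.tripleCount W ↔
      G.compl.triples W = G.compl.triples V := by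
    have hle : G.compl.triples V ⊆ G.compl.triples W ↔
        G.compl.tripleCount V ≤ G.compl.tripleCount W :=
      ⟨card_le_card, fun h => (eq_of_subset_of_card_le (triples_mono hW) h).ge⟩
    have hmono : G.compl.tripleCount W ≤ G.compl.tripleCount V := card_le_card (triples_mono hW)
    rw [← tripleCount_add_tripleCount_compl (G := G), ← tripleCount_add_tripleCount_compl (G := G),
      Subset.antisymm_iff, and_iff_right (triples_mono hW), hle]
    lia
  rw [hcount]
  constructor
  · intro heq x hx y hy z hz hxy hxz hyz hxyz
    by_contra hrel
    obtain ⟨hx, hy, hz, -⟩ := mem_triples.1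
      (heq.ge (mem_triples.2 ⟨hx, hy, hz, hxy, hxz, hyz, hrel⟩))
    exact hxyz ⟨hx, hy, hz⟩
  · refine fun h => (triples_mono hW).antisymm fun ⟨x, y, z⟩ hp => ?_
    obtain ⟨hx, hy, hz, hrel⟩ := mem_triples.1 hp
    by_contra hxyz
    simp only [mem_triples, hrel, and_true] at hxyz
    exact hrel.2.2.2 (h x hx y hy z hz hrel.1 hrel.2.1 hrel.2.2.1 hxyz)

end Complement

section Packing

/-- `S` is the vertex set of a generalized triangle of `G`. -/
def IsTriangleCopy (G : TripleSystem α) (S : Finset α) : Prop := #S = 5 ∧ ¬G.TriangleFree S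

/-- `P` is a family of pairwise disjoint vertex sets of generalized triangles inside `V`. -/
structure IsPacking (G : TripleSystem α) (V : Finset α) (P : Finset (Finset α)) : Prop where
  subset : ∀ S ∈ P, S ⊆ V
  isTriangleCopy : ∀ S ∈ P, G.IsTriangleCopy S
  pairwiseDisjoint : (P : Set (Finset α)).PairwiseDisjoint id

variable {P Q : Finset (Finset α)}

lemma exists_isTriangleCopy_subset (h : ¬G.TriangleFree V) : ∃ S ⊆ V, G.IsTriangleCopy S := by
  classical
  unfold TriangleFree at h
  push Not at h
  obtain ⟨p, hp, q, hq, r, hr, s, hs, w, hw, hpqr, hpqs, hrs, hrsw, hwp, hwq⟩ := h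
  refine ⟨{p, q, r, s, w}, by grind, ?_, fun hfree => ?_⟩
  · grind [G.ne, hpqr.ne_last, hpqr.ne_right, hpqs.ne_last, hpqs.ne_right, hrsw.ne_last,
      hrsw.ne_right]
  · exact (hfree p (by simp) q (by simp) r (by simp) s (by simp) w (by simp)
      hpqr hpqs hrs hrsw).elim hwp hwq

lemma IsTriangleCopy.nonempty (hS : G.IsTriangleCopy S) : S.Nonempty :=
  card_pos.1 (hS.1 ▸ Nat.succ_pos 4)

namespace IsPacking

lemma empty (G : TripleSystem α) (V : Finset α) : G.IsPacking V ∅ := ⟨by simp, by simp, by simp⟩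

lemma mono (hP : G.IsPacking V P) (hV : V ⊆ W) : G.IsPacking W P :=
  ⟨fun S hS => (hP.subset S hS).trans hV, hP.isTriangleCopy, hP.pairwiseDisjoint⟩

lemma of_subset (hP : G.IsPacking V P) (hQ : Q ⊆ P) : G.IsPacking V Q :=
  ⟨fun S hS => hP.subset S (hQ hS), fun S hS => hP.isTriangleCopy S (hQ hS),
    hP.pairwiseDisjoint.subset (coe_subset.2 hQ)⟩

variable [DecidableEq α]

lemma biUnion_subset (hP : G.IsPacking V P) : P.biUnion id ⊆ V :=
  Finset.biUnion_subset.2 hP.subset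

lemma card_biUnion (hP : G.IsPacking V P) : #(P.biUnion id) = 5 * #P := by
  rw [Finset.card_biUnion hP.pairwiseDisjoint, mul_comm]
  exact sum_const_nat fun S hS => (hP.isTriangleCopy S hS).1

lemma insert_copy (hP : G.IsPacking V P) (hS : G.IsTriangleCopy S) (hSV : S ⊆ V \ P.biUnion id) :
    G.IsPacking V (insert S P) ∧ #(insert S P) = #P + 1 := by
  have hdisj : ∀ T ∈ P, Disjoint S T := fun T hT =>
    disjoint_of_subset_left hSV (disjoint_of_subset_right (subset_biUnion_of_mem id hT)
      sdiff_disjoint)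
  have hSP : S ∉ P := fun h => hS.nonempty.ne_empty (disjoint_self.1 (hdisj S h))
  refine ⟨⟨?_, ?_, ?_⟩, card_insert_of_notMem hSP⟩
  · exact forall_mem_insert _ _ _ |>.2 ⟨hSV.trans sdiff_subset, hP.subset⟩
  · exact forall_mem_insert _ _ _ |>.2 ⟨hS, hP.isTriangleCopy⟩
  · rw [coe_insert]
    exact hP.pairwiseDisjoint.insert fun T hT _ => hdisj T hT

/- Each `d ∈ D` yields one further copy, avoiding the copies found before and the rest of `D`. -/
lemma exists_card_eq_add {m : ℕ} (hP : G.IsPacking V P) (hDV : D ⊆ V)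
    (hPD : Disjoint (P.biUnion id) D) (hm : #P + #D ≤ m)
    (hstep : ∀ d ∈ D, ∀ Y ⊆ V, d ∉ Y → #Y ≤ 5 * m → ¬G.TriangleFree (V \ Y)) :
    ∃ Q, G.IsPacking V Q ∧ #Q = #P + #D := by
  induction D using Finset.induction_on generalizing P with
  | empty => exact ⟨P, hP, rfl⟩
  | insert d D hd ih =>
    rw [disjoint_insert_right] at hPD
    rw [card_insert_of_notMem hd] at hm ⊢
    have hDV' : D ⊆ V := (subset_insert d D).trans hDV
    obtain ⟨S, hSV, hS⟩ := exists_isTriangleCopy_subset <|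
      hstep d (mem_insert_self d D) (P.biUnion id ∪ D) (union_subset hP.biUnion_subset hDV')
        (by simp only [mem_union, hPD.1, hd, or_self, not_false_eq_true])
        (by rw [card_union_of_disjoint hPD.2, hP.card_biUnion]; lia)
    rw [sdiff_union_distrib] at hSV
    obtain ⟨hins, hcard⟩ := hP.insert_copy hS (hSV.trans inter_subset_left)
    have hdisj : Disjoint ((insert S P).biUnion id) D := by
      rw [biUnion_insert, disjoint_union_left]
      exact ⟨disjoint_of_subset_left (hSV.trans inter_subset_right) sdiff_disjoint, hPD.2⟩
    obtain ⟨Q, hQ, hQcard⟩ := ih hins hDV' hdisj (by lia)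
      fun e he => hstep e (mem_insert_of_mem he)
    exact ⟨Q, hQ, by lia⟩

end IsPacking

lemma exists_isPacking_triangleFree_sdiff [DecidableEq α] (G : TripleSystem α) (V : Finset α) :
    ∃ P, G.IsPacking V P ∧ G.TriangleFree (V \ P.biUnion id) := by
  classical
  obtain ⟨P, hP, hmax⟩ := exists_max_image {P ∈ V.powerset.powerset | G.IsPacking V P} card
    ⟨∅, by simp [IsPacking.empty]⟩
  have hP := (mem_filter.1 hP).2
  refine ⟨P, hP, by_contra fun hfree => ?_⟩
  obtain ⟨S, hSV, hS⟩ := exists_isTriangleCopy_subset hfree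
  obtain ⟨hins, hcard⟩ := hP.insert_copy hS hSV
  have hle := hmax _ (mem_filter.2 ⟨mem_powerset.2 fun T hT => mem_powerset.2 (hins.subset T hT),
    hins⟩)
  lia

end Packing

section UpperBound

/-- The join of a complete 3-graph on the apex vertices, those of colour `none`, with the complete
tripartite 3-graph on the classes of colour `some i`. -/
def apexTripartite (c : α → Option (Fin 3)) : TripleSystem α where
  Rel x y z := (x ≠ y ∧ x ≠ z ∧ y ≠ z) ∧
    (c x = none ∨ c y = none ∨ c z = none ∨ c x ≠ c y ∧ c x ≠ c z ∧ c y ≠ c z)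
  swap := by grind
  rotate := by grind
  ne h := h.1.1

/-- `c` exhibits `G` on `V` as the join of a complete 3-graph on `t` vertices with a balanced
complete tripartite 3-graph. -/
structure IsExtremalColoring (G : TripleSystem α) (V : Finset α) (t : ℕ)
    (c : α → Option (Fin 3)) : Prop where
  rel_iff : ∀ x ∈ V, ∀ y ∈ V, ∀ z ∈ V, (G.Rel x y z ↔ (apexTripartite c).Rel x y z)
  card_none : #{x ∈ V | c x = none} = t
  card_some : ∀ i, #{x ∈ V | c x = some i} = (#V - t + i) / 3

/- To first order in `n`, the `d` missing apex vertices cost `3 * d * n ^ 2` triples and the smaller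
tripartite part costs `2 / 3 * (5 * k - d) * n ^ 2`. As `k ≤ d`, this is at least
`17 / 3 * k * n ^ 2`, whereas the `k` copies of the generalized triangle carry `5.4 * k * n ^ 2`. -/
lemma add_lt_of_apex_lt {n u m w d k : ℝ} (hu : u = m + d) (hw : w = u - 5 * k) (hun : u ≤ n)
    (hk : 0 ≤ k) (hkd : k ≤ d) (hd : 1 ≤ d) (hm : 0.999 * n ≤ m) (hwn : 0.999 * n ≤ w)
    (hn : 10 ^ 9 ≤ n) :
    m * (m - 1) * (m - 2) + 2 / 9 * w ^ 3 + 5.4 * k * n ^ 2 + 2 * n <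
      u * (u - 1) * (u - 2) + 2 / 9 * m ^ 3 := by
  have hlow : ∀ x y, 0.999 * n ≤ x → 0.999 * n ≤ y → 2.994 * n ^ 2 ≤ x ^ 2 + x * y + y ^ 2 := by
    intro x y hx hy
    nlinarith
  have hfalling : u * (u - 1) * (u - 2) - m * (m - 1) * (m - 2) =
      d * (u ^ 2 + u * m + m ^ 2 - 3 * (u + m) + 2) := by
    rw [hu]
    ring
  have hcubes : m ^ 3 - w ^ 3 = (5 * k - d) * (m ^ 2 + m * w + w ^ 2) := by
    rw [hw, hu]
    ring
  have hsmall : 10 ^ 9 * n ≤ n ^ 2 := by nlinarith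
  have hgain : d * (2.99 * n ^ 2) ≤ d * (u ^ 2 + u * m + m ^ 2 - 3 * (u + m) + 2) := by
    have := hlow u m (by linarith) hm
    gcongr
    linarith
  have hshrink : k * (2.99 * n ^ 2) ≤ k * (m ^ 2 + m * w + w ^ 2) := by
    have := hlow m w hm hwn
    gcongr
    linarith
  have hgrow : d * (m ^ 2 + m * w + w ^ 2) ≤ d * (3 * n ^ 2) := by
    gcongr
    nlinarith [show m ≤ n by linarith, show w ≤ n by linarith]
  have hkd' : k * n ^ 2 ≤ d * n ^ 2 := by gcongr
  have hd' : n ^ 2 ≤ d * n ^ 2 := le_mul_of_one_le_left (sq_nonneg n) hd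
  linarith

variable {t : ℕ} {A : Finset α} {P : Finset (Finset α)}

lemma two_ninths_sub_mul_cube_le (hV : 10 ^ 40 ≤ #V) (ht : (t : ℝ) ≤ 1 / 10 ^ 10 * #V)
    (hle : (#V).descFactorial 3 + 6 * balancedProd (#V - t) ≤
      G.tripleCount V + (#V - t).descFactorial 3) :
    (2 / 9 - 1 / 10 ^ 9) * (#V : ℝ) ^ 3 ≤ G.tripleCount V := by
  have hVR : (10 : ℝ) ^ 40 ≤ #V := by exact_mod_cast hV
  have htV := le_of_cast_le_mul (by norm_num) ht
  have hfalling : (#V - t).descFactorial 3 ≤ (#V).descFactorial 3 :=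
    Nat.descFactorial_le _ (Nat.sub_le _ _)
  have hcount : (6 * balancedProd (#V - t) : ℝ) ≤ G.tripleCount V := by
    exact_mod_cast (by lia : 6 * balancedProd (#V - t) ≤ G.tripleCount V)
  have hcube := sub_pow_three_le_balancedProd htV
  have hmono : ((1 - 1 / 10 ^ 10) * #V : ℝ) ^ 3 ≤ (#V - t) ^ 3 := by
    gcongr
    linarith
  have hlinear : (10 : ℝ) ^ 40 * #V ≤ #V ^ 3 := by
    rw [pow_succ (#V : ℝ)]
    exact mul_le_mul_of_nonneg_right (by nlinarith) (Nat.cast_nonneg _)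
  have ht0 : (0 : ℝ) ≤ t := Nat.cast_nonneg t
  rw [mul_pow] at hmono
  linarith

/- As long as one heavy vertex remains, deleting a few others leaves a generalized triangle. So a
packing that avoids the heavy vertices can be enlarged by one copy for each of them. -/
lemma card_add_card_le_of_heavy [DecidableEq α] (hV : 10 ^ 40 ≤ #V)
    (ht : (t : ℝ) ≤ 1 / 10 ^ 10 * #V)
    (hdense : (2 / 9 - 1 / 10 ^ 9) * (#V : ℝ) ^ 3 ≤ G.tripleCount V)
    (hpack : ∀ Q, G.IsPacking V Q → #Q ≤ t) (hA : A ⊆ V)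
    (hheavy : ∀ a ∈ A, 0.36 * (#V : ℝ) ^ 2 ≤ G.degree V a) (hP : G.IsPacking (V \ A) P) :
    #P + #A ≤ t := by
  by_contra! hlt
  obtain ⟨D, hDA, hD⟩ := exists_subset_card_eq (min_le_left #A (t + 1))
  obtain ⟨P', hP', hcard⟩ := exists_subset_card_eq (show t + 1 - #D ≤ #P by lia)
  have hdisj : Disjoint (P'.biUnion id) D :=
    disjoint_of_subset_left ((hP.of_subset hP').biUnion_subset)
      (disjoint_of_subset_right hDA sdiff_disjoint)
  obtain ⟨Q, hQ, hQcard⟩ := ((hP.of_subset hP').mono sdiff_subset).exists_card_eq_add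
    (hDA.trans hA) hdisj (m := t + 1) (by lia) fun d hd Y hY hdY hYcard => by
      refine not_triangleFree_sdiff ((by norm_num : 10 ^ 39 ≤ 10 ^ 40).trans hV) hdense hY ?_
        (mem_sdiff.2 ⟨hA (hDA hd), hdY⟩) (hheavy d (hDA hd))
      have hVR : (10 : ℝ) ^ 40 ≤ #V := by exact_mod_cast hV
      have hYR : (#Y : ℝ) ≤ 5 * (t + 1) := by exact_mod_cast hYcard
      linarith
  have := hpack Q hQ
  lia

lemma tripleCount_lt_of_card_lt [DecidableEq α] (hV : 10 ^ 40 ≤ #V)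
    (ht : (t : ℝ) ≤ 1 / 10 ^ 10 * #V) (hA : A ⊆ V) (hAt : #A < t)
    (hlight : ∀ v ∈ V \ A, (G.degree V v : ℝ) ≤ 0.36 * #V ^ 2)
    (hP : G.IsPacking (V \ A) P) (hPA : #P + #A ≤ t)
    (hfree : G.TriangleFree ((V \ A) \ P.biUnion id)) :
    G.tripleCount V + (#V - t).descFactorial 3 <
      (#V).descFactorial 3 + 6 * balancedProd (#V - t) := by
  have hVR : (10 : ℝ) ^ 40 ≤ #V := by exact_mod_cast hV
  have htV := le_of_cast_le_mul (by norm_num) ht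
  have hAR : (#A + 1 : ℝ) ≤ t := by exact_mod_cast hAt
  have hPAR : (#P + #A : ℝ) ≤ t := by exact_mod_cast hPA
  have hU : (#(V \ A) : ℝ) = #V - #A := by
    rw [← card_sdiff_add_card_eq_card hA]
    push_cast
    ring
  have hW : (#((V \ A) \ P.biUnion id) : ℝ) = #(V \ A) - 5 * #P := by
    rw [← card_sdiff_add_card_eq_card hP.biUnion_subset, hP.card_biUnion]
    push_cast
    ring
  have hWV : 10 ^ 28 ≤ #((V \ A) \ P.biUnion id) := by
    have : (10 : ℝ) ^ 28 ≤ #((V \ A) \ P.biUnion id) := by linarith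
    exact_mod_cast this
  have hjoin : (G.tripleCount V + (#(V \ A)).descFactorial 3 : ℝ) ≤
      (#V).descFactorial 3 + G.tripleCount (V \ A) := by
    exact_mod_cast tripleCount_add_descFactorial_le sdiff_subset
  have hdelete := tripleCount_le_tripleCount_sdiff_add hP.biUnion_subset
    (d := 0.36 * (#V : ℝ) ^ 2) fun v hv =>
      (Nat.cast_le.2 (degree_mono sdiff_subset v)).trans (hlight v (hP.biUnion_subset hv))
  have hturan := hfree.tripleCount_le_cube hWV
  have hcube := sub_pow_three_le_balancedProd htV
  have hgap := add_lt_of_apex_lt (n := #V) (m := #V - t) (d := t - #A) (by rw [hU]; ring) hW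
    (by linarith) (Nat.cast_nonneg _) (by linarith) (by linarith) (by linarith) (by linarith)
    (by linarith)
  rw [hP.card_biUnion] at hdelete
  simp only [cast_descFactorial_three] at hjoin
  rw [← Nat.cast_lt (α := ℝ)]
  push_cast [cast_descFactorial_three, htV]
  push_cast at hdelete
  linarith

lemma exists_isExtremalColoring_of_multipartite [DecidableEq α] (hA : A ⊆ V) (f : α → Fin 3)
    (hjoin : ∀ x ∈ V, ∀ y ∈ V, ∀ z ∈ V, x ≠ y → x ≠ z → y ≠ z →
      ¬(x ∈ V \ A ∧ y ∈ V \ A ∧ z ∈ V \ A) → G.Rel x y z)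
    (hcard : ∀ i, #{x ∈ V \ A | f x = i} = (#(V \ A) + i) / 3)
    (hrel : ∀ x ∈ V \ A, ∀ y ∈ V \ A, ∀ z ∈ V \ A, (G.Rel x y z ↔ (multipartite f).Rel x y z)) :
    ∃ c, G.IsExtremalColoring V #A c := by
  refine ⟨fun x => if x ∈ A then none else some (f x), fun x hx y hy z hz => ?_, ?_, fun i => ?_⟩
  · simp only [apexTripartite]
    by_cases hxyz : x ∈ V \ A ∧ y ∈ V \ A ∧ z ∈ V \ A
    · rw [hrel x hxyz.1 y hxyz.2.1 z hxyz.2.2, multipartite]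
      grind
    · have := hjoin x hx y hy z hz
      grind [G.ne, Rel.ne_last, Rel.ne_right]
  · congr 1
    grind
  · rw [← card_sdiff_of_subset hA, ← hcard]
    congr 1
    grind

theorem exists_isExtremalColoring (hV : 10 ^ 40 ≤ #V) (ht : (t : ℝ) ≤ 1 / 10 ^ 10 * #V)
    (hpack : ∀ Q, G.IsPacking V Q → #Q ≤ t)
    (hle : (#V).descFactorial 3 + 6 * balancedProd (#V - t) ≤
      G.tripleCount V + (#V - t).descFactorial 3) :
    ∃ c, G.IsExtremalColoring V t c := by
  classical
  have hdense := two_ninths_sub_mul_cube_le hV ht hle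
  set A : Finset α := {v ∈ V | 0.36 * (#V : ℝ) ^ 2 ≤ G.degree V v}
  have hA : A ⊆ V := filter_subset _ _
  obtain ⟨P, hP, hfree⟩ := exists_isPacking_triangleFree_sdiff G (V \ A)
  have hPA : #P + #A ≤ t :=
    card_add_card_le_of_heavy hV ht hdense hpack hA (fun a ha => (mem_filter.1 ha).2) hP
  have hAt : #A = t := by
    refine eq_of_le_of_not_lt (by lia) fun hlt => hle.not_gt ?_
    refine tripleCount_lt_of_card_lt hV ht hA hlt (fun v hv => ?_) hP hPA hfree
    by_contra! hheavy
    exact (mem_sdiff.1 hv).2 (mem_filter.2 ⟨(mem_sdiff.1 hv).1, hheavy.le⟩)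
  obtain rfl : P = ∅ := card_eq_zero.1 (by lia)
  rw [biUnion_empty, sdiff_empty] at hfree
  have hU : #(V \ A) = #V - t := by rw [card_sdiff_of_subset hA, hAt]
  have hUcard : 10 ^ 28 < #(V \ A) := by
    have hVR : (10 : ℝ) ^ 40 ≤ #V := by exact_mod_cast hV
    rw [hU, ← Nat.cast_lt (α := ℝ)]
    push_cast [le_of_cast_le_mul (by norm_num) ht]
    linarith
  have hjoin := tripleCount_add_descFactorial_le (G := G) (sdiff_subset (s := V) (t := A))
  have hturan := hfree.tripleCount_le hUcard.le
  rw [hU] at hjoin hturan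
  obtain ⟨f, hcard, hrel⟩ := hfree.exists_multipartite_of_le hUcard (by rw [hU]; lia)
  subst hAt
  exact exists_isExtremalColoring_of_multipartite hA f
    ((tripleCount_add_descFactorial_eq_iff sdiff_subset).1 (by rw [hU]; lia)) hcard hrel

end UpperBound

section ExtremalColoring

variable {t : ℕ} {c : α → Option (Fin 3)}

lemma rel_apexTripartite_iff_of_ne_none (hx : c x ≠ none) (hy : c y ≠ none) (hz : c z ≠ none) :
    (apexTripartite c).Rel x y z ↔ (multipartite fun x => (c x).getD 0).Rel x y z := by
  obtain ⟨i, hi⟩ := Option.ne_none_iff_exists'.1 hx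
  obtain ⟨j, hj⟩ := Option.ne_none_iff_exists'.1 hy
  obtain ⟨k, hk⟩ := Option.ne_none_iff_exists'.1 hz
  simp only [apexTripartite, multipartite, hi, hj, hk, Option.getD_some, reduceCtorEq, false_or,
    ne_eq, Option.some.injEq]
  grind

namespace IsExtremalColoring

lemma triangleFree_of_forall_ne_none (hc : G.IsExtremalColoring V t c) (hS : S ⊆ V)
    (hsome : ∀ x ∈ S, c x ≠ none) : G.TriangleFree S := by
  intro p hp q hq r hr s hs w hw hpqr hpqs _ hrsw
  have hrel : ∀ {x y z}, x ∈ S → y ∈ S → z ∈ S → G.Rel x y z →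
      (multipartite fun x => (c x).getD 0).Rel x y z := fun hx hy hz h =>
    (rel_apexTripartite_iff_of_ne_none (hsome _ hx) (hsome _ hy) (hsome _ hz)).1
      ((hc.rel_iff _ (hS hx) _ (hS hy) _ (hS hz)).1 h)
  have hpqr' := hrel hp hq hr hpqr
  have hpqs' := hrel hp hq hs hpqs
  have hrsw' := hrel hr hs hw hrsw
  simp only [multipartite] at hpqr' hpqs' hrsw'
  lia

lemma card_le_of_isPacking (hc : G.IsExtremalColoring V t c) {P : Finset (Finset α)}
    (hP : G.IsPacking V P) : #P ≤ t := by
  classical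
  have hapex : ∀ S ∈ P, ∃ x ∈ S, c x = none := fun S hS => by
    by_contra! hsome
    exact (hP.isTriangleCopy S hS).2 (hc.triangleFree_of_forall_ne_none (hP.subset S hS) hsome)
  rw [← hc.card_none]
  refine card_le_card_of_forall_subsingleton (fun S x => x ∈ S) (fun S hS => ?_) ?_
  · obtain ⟨x, hx, hcx⟩ := hapex S hS
    exact ⟨x, mem_filter.2 ⟨hP.subset S hS hx, hcx⟩, hx⟩
  · rintro x - S ⟨hS, hxS⟩ T ⟨hT, hxT⟩
    exact hP.pairwiseDisjoint.elim_finset hS hT x hxS hxT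

lemma tripleCount_add (hc : G.IsExtremalColoring V t c) :
    G.tripleCount V + (#V - t).descFactorial 3 =
      (#V).descFactorial 3 + 6 * balancedProd (#V - t) := by
  classical
  have hcard : #{x ∈ V | c x ≠ none} = #V - t := by
    rw [← hc.card_none, ← card_filter_add_card_filter_not (s := V) (fun x => c x = none)]
    simp
  have hjoin : ∀ x ∈ V, ∀ y ∈ V, ∀ z ∈ V, x ≠ y → x ≠ z → y ≠ z →
      ¬(x ∈ {x ∈ V | c x ≠ none} ∧ y ∈ {x ∈ V | c x ≠ none} ∧ z ∈ {x ∈ V | c x ≠ none}) →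
      G.Rel x y z := by
    intro x hx y hy z hz hxy hxz hyz hnot
    rw [hc.rel_iff x hx y hy z hz]
    simp only [apexTripartite]
    grind
  have htriples : G.tripleCount {x ∈ V | c x ≠ none} =
      (multipartite fun x => (c x).getD 0).tripleCount {x ∈ V | c x ≠ none} := by
    refine congrArg card (Finset.ext fun ⟨x, y, z⟩ => ?_)
    rw [mem_triples, mem_triples]
    refine and_congr_right fun hx => and_congr_right fun hy => and_congr_right fun hz => ?_
    rw [mem_filter] at hx hy hz
    rw [hc.rel_iff x hx.1 y hy.1 z hz.1, rel_apexTripartite_iff_of_ne_none hx.2 hy.2 hz.2]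
  have hclass : ∀ i, {x ∈ {x ∈ V | c x ≠ none} | (c x).getD 0 = i} = {x ∈ V | c x = some i} := by
    intro i
    ext x
    cases hx : c x <;> simp [hx]
  have hinner : G.tripleCount {x ∈ V | c x ≠ none} = 6 * balancedProd (#V - t) := by
    rw [htriples, tripleCount_multipartite, balancedProd]
    simp only [hclass, hc.card_some]
  rw [← hinner, ← hcard]
  exact (tripleCount_add_descFactorial_eq_iff (filter_subset _ V)).2 hjoin

end IsExtremalColoring

end ExtremalColoring

end TripleSystem

namespace HGraph

/-- The edges of a 3-uniform hypergraph as a relation on ordered triples. -/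
def tripleSystem (H : HGraph 3) : TripleSystem ℕ where
  Rel x y z := (x ≠ y ∧ x ≠ z ∧ y ≠ z) ∧ {x, y, z} ∈ H.edges
  swap h := ⟨⟨h.1.1.symm, h.1.2.2, h.1.2.1⟩, by rw [insert_comm]; exact h.2⟩
  rotate h := ⟨⟨h.1.2.2, h.1.1.symm, h.1.2.1.symm⟩, by rw [pair_comm, insert_comm]; exact h.2⟩
  ne h := h.1.1

variable {H H' : HGraph 3} {S : Finset ℕ} {k t : ℕ} {c c' : ℕ → Option (Fin 3)}

lemma tripleCount_eq_six {e : Finset ℕ} (he : e ∈ H.edges) : H.tripleSystem.tripleCount e = 6 := by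
  have hcomplete := (TripleSystem.tripleCount_add_descFactorial_eq_iff (G := H.tripleSystem)
    (empty_subset e)).2 fun x hx y hy z hz hxy hxz hyz _ => by
      have hsub : {x, y, z} ⊆ e := by grind
      refine ⟨⟨hxy, hxz, hyz⟩, ?_⟩
      rwa [eq_of_subset_of_card_le hsub]
      rw [H.edges_card e he, card_eq_three.2 ⟨x, y, z, hxy, hxz, hyz, rfl⟩]
  rw [H.edges_card e he] at hcomplete
  simpa [TripleSystem.tripleCount, TripleSystem.triples, Nat.descFactorial] using hcomplete

theorem tripleCount_verts (H : HGraph 3) :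
    H.tripleSystem.tripleCount H.verts = 6 * #H.edges := by
  have hmaps : ∀ p ∈ H.tripleSystem.triples H.verts, {p.1, p.2.1, p.2.2} ∈ H.edges :=
    fun ⟨_, _, _⟩ hp => (TripleSystem.mem_triples.1 hp).2.2.2.2
  rw [TripleSystem.tripleCount, card_eq_sum_card_fiberwise hmaps, mul_comm]
  refine sum_const_nat fun e he => ?_
  rw [← tripleCount_eq_six he]
  refine congrArg card (Finset.ext fun ⟨x, y, z⟩ => ?_)
  simp only [mem_filter, TripleSystem.mem_triples]
  constructor
  · rintro ⟨⟨-, -, -, hrel⟩, rfl⟩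
    simp [hrel]
  · rintro ⟨hx, hy, hz, hrel⟩
    have hsub := H.edges_sub e he
    refine ⟨⟨hsub hx, hsub hy, hsub hz, hrel⟩, eq_of_subset_of_card_le (by grind) ?_⟩
    rw [H.edges_card e he, H.edges_card _ hrel.2]

lemma mem_edges_induce {r : ℕ} {H : HGraph r} {e : Finset ℕ} :
    e ∈ (H.induce S).edges ↔ e ∈ H.edges ∧ e ⊆ S := by
  simp only [induce, ofEdges, mem_filter]
  exact ⟨fun h => h.1, fun h => ⟨h, subset_inter (H.edges_sub _ h.1) h.2, H.edges_card _ h.1⟩⟩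

lemma verts_induce {r : ℕ} {H : HGraph r} (hS : S ⊆ H.verts) : (H.induce S).verts = S :=
  inter_eq_right.2 hS

lemma verts_genTri_three : (genTri 3).verts = {1, 2, 3, 4, 5} := by decide

lemma edges_genTri_three : (genTri 3).edges = {{1, 2, 3}, {1, 2, 4}, {3, 4, 5}} := by decide

lemma genTri_isCopyIn_induce_iff (hS : S ⊆ H.verts) :
    (genTri 3).IsCopyIn (H.induce S) ↔ ¬H.tripleSystem.TriangleFree S := by
  unfold IsCopyIn
  rw [verts_genTri_three, edges_genTri_three, verts_induce hS]
  simp only [mem_insert, mem_singleton, forall_eq_or_imp, forall_eq, mem_edges_induce,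
    image_insert, image_singleton]
  constructor
  · rintro ⟨f, hinj, ⟨h₁, h₂, h₃, h₄, h₅⟩, ⟨h₁₂₃, -⟩, ⟨h₁₂₄, -⟩, ⟨h₃₄₅, -⟩⟩ hfree
    have hne : ∀ i ∈ ({1, 2, 3, 4, 5} : Finset ℕ), ∀ j ∈ ({1, 2, 3, 4, 5} : Finset ℕ),
      i ≠ j → f i ≠ f j := fun i hi j hj hij h => hij (hinj hi hj h)
    simp only [mem_insert, mem_singleton, forall_eq_or_imp, forall_eq] at hne
    have := hfree (f 1) h₁ (f 2) h₂ (f 3) h₃ (f 4) h₄ (f 5) h₅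
    simp only [tripleSystem] at this
    grind
  · intro h
    unfold TripleSystem.TriangleFree at h
    push Not at h
    obtain ⟨p, hp, q, hq, r, hr, s, hs, w, hw, hpqr, hpqs, hrs, hrsw, hwp, hwq⟩ := h
    refine ⟨fun i => [p, q, r, s, w].getD (i - 1) p, card_image_iff.1 ?_, ?_, ?_⟩
    · simp only [image_insert, image_singleton]
      have := hpqr.1
      have := hpqs.1
      have := hrsw.1
      change #{p, q, r, s, w} = 5
      grind
    · simp [hp, hq, hr, hs, hw]
    · simp [insert_subset_iff, hp, hq, hr, hs, hw, hpqr.2, hpqs.2, hrsw.2]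

theorem hasMatching_genTri_iff :
    (genTri 3).HasMatching H k ↔ ∃ P, H.tripleSystem.IsPacking H.verts P ∧ #P = k := by
  have hcard : #(genTri 3).verts = 5 := by decide
  constructor
  · rintro ⟨S, hS, hdisj, hcopy⟩
    have hS' : ∀ i, H.tripleSystem.IsTriangleCopy (S i) := fun i =>
      ⟨(hS i).2.trans hcard, (genTri_isCopyIn_induce_iff (hS i).1).1 (hcopy i)⟩
    have hinj : Function.Injective S := fun i j hij => by
      by_contra hne
      exact (hS' i).nonempty.ne_empty (disjoint_self.1 (hij ▸ hdisj i j hne))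
    refine ⟨univ.image S, ⟨by simpa using fun i => (hS i).1, by simpa using hS', ?_⟩, ?_⟩
    · rw [coe_image, coe_univ, Set.image_univ]
      rintro _ ⟨i, rfl⟩ _ ⟨j, rfl⟩ hij
      exact hdisj i j (ne_of_apply_ne S hij)
    · rw [card_image_of_injective _ hinj, card_univ, Fintype.card_fin]
  · rintro ⟨P, hP, rfl⟩
    refine ⟨fun i => P.equivFin.symm i, fun i => ?_, fun i j hij => ?_, fun i => ?_⟩
    · have hSi := hP.subset _ (P.equivFin.symm i).2
      exact ⟨hSi, (hP.isTriangleCopy _ (P.equivFin.symm i).2).1.trans hcard.symm⟩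
    · exact hP.pairwiseDisjoint (P.equivFin.symm i).2 (P.equivFin.symm j).2 fun h =>
        hij (P.equivFin.symm.injective (Subtype.ext h))
    · exact (genTri_isCopyIn_induce_iff (hP.subset _ (P.equivFin.symm i).2)).2
        (hP.isTriangleCopy _ (P.equivFin.symm i).2).2

lemma iso_iff : H.Iso H' ↔ ∃ f : ℕ → ℕ, Set.BijOn f H.verts H'.verts ∧
    ∀ x ∈ H.verts, ∀ y ∈ H.verts, ∀ z ∈ H.verts,
      (H.tripleSystem.Rel x y z ↔ H'.tripleSystem.Rel (f x) (f y) (f z)) := by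
  refine exists_congr fun f => and_congr_right fun hf => ?_
  have hne : ∀ x ∈ H.verts, ∀ y ∈ H.verts, (f x ≠ f y ↔ x ≠ y) := fun x hx y hy =>
    not_congr (hf.injOn.eq_iff hx hy)
  constructor
  · intro hedges x hx y hy z hz
    simp only [tripleSystem, hne x hx y hy, hne x hx z hz, hne y hy z hz]
    refine and_congr_right fun hxyz => ?_
    rw [hedges _ (mem_powersetCard.2 ⟨by grind, card_eq_three.2 ⟨x, y, z, by tauto⟩⟩)]
    simp only [image_insert, image_singleton]
  · intro hrel e he
    obtain ⟨hsub, hcard⟩ := mem_powersetCard.1 he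
    obtain ⟨x, y, z, hxy, hxz, hyz, rfl⟩ := card_eq_three.1 hcard
    simp only [insert_subset_iff, singleton_subset_iff] at hsub
    obtain ⟨hx, hy, hz⟩ := hsub
    have := hrel x hx y hy z hz
    simp only [tripleSystem, hne x hx y hy, hne x hx z hz, hne y hy z hz] at this
    simp only [image_insert, image_singleton]
    tauto

lemma iso_of_isExtremalColoring (hcard : #H.verts = #H'.verts)
    (hc : H.tripleSystem.IsExtremalColoring H.verts t c)
    (hc' : H'.tripleSystem.IsExtremalColoring H'.verts t c') : H.Iso H' := by
  have hclass : ∀ o, #{x ∈ H.verts | c x = o} = #{y ∈ H'.verts | c' y = o}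
    | none => by rw [hc.card_none, hc'.card_none]
    | some i => by rw [hc.card_some, hc'.card_some, hcard]
  obtain ⟨f, hf, hcf⟩ := exists_bijOn_of_card_fiber_eq hclass
  refine iso_iff.2 ⟨f, hf, fun x hx y hy z hz => ?_⟩
  rw [hc.rel_iff x hx y hy z hz, hc'.rel_iff _ (hf.mapsTo hx) _ (hf.mapsTo hy) _ (hf.mapsTo hz)]
  simp only [TripleSystem.apexTripartite, hcf x hx, hcf y hy, hcf z hz, ne_eq,
    hf.injOn.eq_iff hx hy, hf.injOn.eq_iff hx hz, hf.injOn.eq_iff hy hz]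

lemma Iso.exists_isExtremalColoring (h : H.Iso H')
    (hc' : H'.tripleSystem.IsExtremalColoring H'.verts t c') :
    #H.verts = #H'.verts ∧ ∃ c, H.tripleSystem.IsExtremalColoring H.verts t c := by
  obtain ⟨f, hf, hrel⟩ := iso_iff.1 h
  have hcard : #H.verts = #H'.verts := Set.BijOn.finsetCard_eq f hf
  have hclass : ∀ o, #{x ∈ H.verts | c' (f x) = o} = #{y ∈ H'.verts | c' y = o} := fun o => by
    refine Set.BijOn.finsetCard_eq f ?_
    convert hf.subset_right (coe_subset.2 (filter_subset (fun y => c' y = o) H'.verts)) using 1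
    ext x
    simpa using fun hx _ => hf.mapsTo hx
  refine ⟨hcard, fun x => c' (f x), fun x hx y hy z hz => ?_, ?_, fun i => ?_⟩
  · rw [hrel x hx y hy z hz, hc'.rel_iff _ (hf.mapsTo hx) _ (hf.mapsTo hy) _ (hf.mapsTo hz)]
    simp only [TripleSystem.apexTripartite, ne_eq,
      hf.injOn.eq_iff hx hy, hf.injOn.eq_iff hx hz, hf.injOn.eq_iff hy hz]
  · rw [hclass, hc'.card_none]
  · rw [hclass, hc'.card_some, hcard]

end HGraph

section Construction

variable {r ℓ t n : ℕ} {V e : Finset ℕ}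

lemma HGraph.mem_edges_join {G H : HGraph r} :
    e ∈ (G.join H).edges ↔ e ∈ G.edges ∨ e ∈ H.edges ∨
      e ∈ powersetCard r (G.verts ∪ H.verts) ∧ (e ∩ G.verts).Nonempty ∧ (e ∩ H.verts).Nonempty := by
  simp only [join, ofEdges, mem_filter, mem_union, mem_powersetCard]
  have hG : e ∈ G.edges → e ⊆ G.verts ∪ H.verts ∧ #e = r := fun he =>
    ⟨(G.edges_sub e he).trans subset_union_left, G.edges_card e he⟩
  have hH : e ∈ H.edges → e ⊆ G.verts ∪ H.verts ∧ #e = r := fun he =>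
    ⟨(H.edges_sub e he).trans subset_union_right, H.edges_card e he⟩
  tauto

lemma mem_edges_completeOn : e ∈ (completeOn r V).edges ↔ e ⊆ V ∧ #e = r := by
  simp [completeOn, HGraph.ofEdges, mem_powersetCard]

lemma mem_edges_turanOn : e ∈ (turanOn r ℓ V).edges ↔
    (e ⊆ V ∧ #e = r) ∧ ∀ u ∈ e, ∀ v ∈ e, u % ℓ = v % ℓ → u = v := by
  simp only [turanOn, HGraph.ofEdges, mem_filter, mem_powersetCard]
  tauto

/-- The hypergraph `K_t^3 ⋈ T_3(n - t, 3)` on `{0, …, n - 1}`. -/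
def apexTuran (t n : ℕ) : HGraph 3 :=
  (completeOn 3 (range t)).join (turanOn 3 3 (Ico t n))

/-- The colouring of `apexTuran t n` by its apex vertices and residue classes, the latter numbered
so that class `i` has `(n - t + i) / 3` vertices. -/
def apexTuranColor (t x : ℕ) : Option (Fin 3) :=
  if x < t then none else some (Fin.ofNat 3 (2 * (x - t) + 2))

lemma apexTuranColor_eq_none_iff {x : ℕ} : apexTuranColor t x = none ↔ x < t := by
  simp [apexTuranColor]

lemma apexTuranColor_eq_some_iff {x : ℕ} {i : Fin 3} (hx : t ≤ x) :
    apexTuranColor t x = some i ↔ (x - t + i) % 3 = 2 := by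
  simp only [apexTuranColor, hx.not_gt, if_false, Option.some.injEq, Fin.ext_iff, Fin.val_ofNat]
  omega

lemma apexTuranColor_eq_iff {x y : ℕ} (hx : t ≤ x) (hy : t ≤ y) :
    apexTuranColor t x = apexTuranColor t y ↔ x % 3 = y % 3 := by
  simp only [apexTuranColor, hx.not_gt, hy.not_gt, if_false, Option.some.injEq, Fin.ext_iff,
    Fin.val_ofNat]
  omega

lemma verts_apexTuran (ht : t ≤ n) : (apexTuran t n).verts = range n := by
  change range t ∪ Ico t n = range n
  ext x
  simp only [mem_union, mem_range, mem_Ico]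
  lia

lemma tripleSystem_apexTuran_rel_iff (ht : t ≤ n) {x y z : ℕ} (hx : x < n) (hy : y < n)
    (hz : z < n) : (apexTuran t n).tripleSystem.Rel x y z ↔
      (TripleSystem.apexTripartite (apexTuranColor t)).Rel x y z := by
  refine and_congr_right fun hxyz => ?_
  have hverts : range t ∪ Ico t n = range n := verts_apexTuran ht
  have hcard : #{x, y, z} = 3 := card_eq_three.2 ⟨x, y, z, by tauto⟩
  rw [apexTuran, HGraph.mem_edges_join, mem_edges_completeOn, mem_edges_turanOn]
  change _ ∨ _ ∨ _ ∈ powersetCard 3 (range t ∪ Ico t n) ∧ (_ ∩ range t).Nonempty ∧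
    (_ ∩ Ico t n).Nonempty ↔ _
  have hmeet : ∀ S : Finset ℕ, ({x, y, z} ∩ S).Nonempty ↔ x ∈ S ∨ y ∈ S ∨ z ∈ S := fun S => by
    simp only [Finset.Nonempty, mem_inter, mem_insert, mem_singleton]
    grind
  simp only [hverts, hmeet, mem_powersetCard, hcard, insert_subset_iff, singleton_subset_iff,
    mem_range, mem_Ico, mem_insert, mem_singleton, forall_eq_or_imp, forall_eq, and_true]
  simp only [apexTuranColor_eq_none_iff]
  by_cases hapex : x < t ∨ y < t ∨ z < t
  · lia
  · rw [ne_eq, ne_eq, ne_eq, apexTuranColor_eq_iff (by lia) (by lia),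
      apexTuranColor_eq_iff (by lia) (by lia), apexTuranColor_eq_iff (by lia) (by lia)]
    lia

lemma card_filter_apexTuranColor_eq_some (ht : t ≤ n) (i : Fin 3) :
    #{x ∈ range n | apexTuranColor t x = some i} = (n - t + i) / 3 := by
  induction n, ht using Nat.le_induction with
  | base =>
    have hnot : ∀ x ∈ range t, apexTuranColor t x ≠ some i := fun x hx => by
      simp [apexTuranColor_eq_none_iff.2 (mem_range.1 hx)]
    rw [filter_eq_empty_iff.2 hnot, card_empty]
    omega
  | succ n hn ih =>
    rw [range_add_one, filter_insert]
    split_ifs with h <;> rw [apexTuranColor_eq_some_iff hn] at h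
    · rw [card_insert_of_notMem (by simp), ih]
      omega
    · rw [ih]
      omega

lemma card_verts_apexTuran (ht : t ≤ n) : #(apexTuran t n).verts = n := by
  rw [verts_apexTuran ht, card_range]

theorem isExtremalColoring_apexTuran (ht : t ≤ n) : (apexTuran t n).tripleSystem.IsExtremalColoring
    (apexTuran t n).verts t (apexTuranColor t) := by
  rw [verts_apexTuran ht]
  exact {
    rel_iff x hx y hy z hz :=
      tripleSystem_apexTuran_rel_iff ht (mem_range.1 hx) (mem_range.1 hy) (mem_range.1 hz)
    card_none := by
      have hapex : {x ∈ range n | apexTuranColor t x = none} = range t := by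
        ext x
        simp only [mem_filter, mem_range, apexTuranColor_eq_none_iff]
        lia
      rw [hapex, card_range]
    card_some i := by rw [card_range, card_filter_apexTuranColor_eq_some ht] }

end Construction

namespace HGraph

variable {H : HGraph 3} {n t : ℕ} {c : ℕ → Option (Fin 3)}

lemma not_hasMatching_of_isExtremalColoring
    (hc : H.tripleSystem.IsExtremalColoring H.verts t c) :
    ¬(genTri 3).HasMatching H (t + 1) := fun h => by
  obtain ⟨P, hP, hcard⟩ := hasMatching_genTri_iff.1 h
  have := hc.card_le_of_isPacking hP
  lia

lemma exists_isExtremalColoring_of_not_hasMatching (hverts : 10 ^ 40 ≤ #H.verts)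
    (ht : (t : ℝ) ≤ 1 / 10 ^ 10 * #H.verts) (hH : ¬(genTri 3).HasMatching H (t + 1))
    (hle : (#H.verts).descFactorial 3 + 6 * balancedProd (#H.verts - t) ≤
      6 * #H.edges + (#H.verts - t).descFactorial 3) :
    ∃ c, H.tripleSystem.IsExtremalColoring H.verts t c := by
  refine TripleSystem.exists_isExtremalColoring hverts ht (fun P hP => ?_)
    (by rwa [tripleCount_verts])
  by_contra! hlt
  obtain ⟨Q, hQ, hcard⟩ := exists_subset_card_eq (Nat.succ_le_of_lt hlt)
  exact hH (hasMatching_genTri_iff.2 ⟨Q, hP.of_subset hQ, hcard⟩)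

end HGraph

variable {n t : ℕ}

theorem exMatchN_genTri_three (hn : 10 ^ 40 ≤ n) (ht : (t : ℝ) ≤ 1 / 10 ^ 10 * n) :
    6 * exMatchN 3 n t (genTri 3) + (n - t).descFactorial 3 =
      n.descFactorial 3 + 6 * balancedProd (n - t) := by
  have htn : t ≤ n := le_of_cast_le_mul (by norm_num) ht
  have hcolor := isExtremalColoring_apexTuran htn
  have hcount := hcolor.tripleCount_add
  rw [HGraph.tripleCount_verts, card_verts_apexTuran htn] at hcount
  have hgreatest : IsGreatest {m | ∃ H : HGraph 3, #H.verts = n ∧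
      ¬(genTri 3).HasMatching H (t + 1) ∧ #H.edges = m} #(apexTuran t n).edges := by
    refine ⟨⟨apexTuran t n, card_verts_apexTuran htn,
      HGraph.not_hasMatching_of_isExtremalColoring hcolor, rfl⟩, ?_⟩
    rintro _ ⟨H, rfl, hH, rfl⟩
    by_contra! hlt
    obtain ⟨c, hc⟩ := H.exists_isExtremalColoring_of_not_hasMatching hn ht hH (by lia)
    have := hc.tripleCount_add
    rw [HGraph.tripleCount_verts] at this
    lia
  rw [exMatchN, hgreatest.csSup_eq, hcount]

theorem isExtremalMatchingFree_genTri_three_iff (hn : 10 ^ 40 ≤ n)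
    (ht : (t : ℝ) ≤ 1 / 10 ^ 10 * n) {H : HGraph 3} :
    IsExtremalMatchingFree 3 n t (genTri 3) H ↔
      #H.verts = n ∧ ∃ c, H.tripleSystem.IsExtremalColoring H.verts t c := by
  have hex := exMatchN_genTri_three hn ht
  constructor
  · rintro ⟨rfl, hH, hedges⟩
    refine ⟨rfl, HGraph.exists_isExtremalColoring_of_not_hasMatching hn ht hH ?_⟩
    rw [hedges, hex]
  · rintro ⟨rfl, c, hc⟩
    have hcount := hc.tripleCount_add
    rw [HGraph.tripleCount_verts] at hcount
    exact ⟨rfl, HGraph.not_hasMatching_of_isExtremalColoring hc, by lia⟩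

end

/-- the density Corrádi–Hajnal theorem for the 3-uniform
generalized triangle. -/
theorem statement_7 :
    ∃ N₀ : ℕ, ∃ c : ℝ, 0 < c ∧ ∀ n : ℕ, N₀ ≤ n → ∀ t : ℕ, (t : ℝ) ≤ c * n →
      ∀ H : HGraph 3, IsExtremalMatchingFree 3 n t (genTri 3) H ↔
        H.Iso ((completeOn 3 (Finset.range t)).join (turanOn 3 3 (Finset.Ico t n))) := by
  refine ⟨10 ^ 40, 1 / 10 ^ 10, by norm_num, fun n hn t ht H => ?_⟩
  have htn : t ≤ n := le_of_cast_le_mul (by norm_num) ht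
  have hcard := card_verts_apexTuran htn
  have hcolor := isExtremalColoring_apexTuran htn
  change IsExtremalMatchingFree 3 n t (genTri 3) H ↔ H.Iso (apexTuran t n)
  rw [isExtremalMatchingFree_genTri_three_iff hn ht]
  constructor
  · rintro ⟨hH, c, hc⟩
    exact HGraph.iso_of_isExtremalColoring (hH.trans hcard.symm) hc hcolor
  · intro hiso
    obtain ⟨hH, hc⟩ := hiso.exists_isExtremalColoring hcolor
    exact ⟨hH.trans hcard, hc⟩

end DensityCH
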